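/- (Magnus 1932) Let m be a natural number and let r be any element of the free group on Fin m. Then the word problem for the one-relator group ⟨Fin m | r = 1⟩ is decidable: the predicate on lists l : List (Fin m × Bool) given by 'FreeGroup.mk l lies in the normal closure of {r}' is a computable predicate (ComputablePred). -/

import Mathlib

/-!
Magnus's induction on the length of a cyclically reduced relator `r`. For a letter `x` of `r`, the
induction carries two facts about the subgroup `F` generated by the other letters: it embeds in the
one-relator group (the Freiheitssatz), and the complement of its image is recursively enumerable.
Membership in the normal closure of `r` is recursively enumerable in any case, so the second fact,
together with the first, decides the word problem.

If some letter `t` has exponent sum zero in `r`, then `r` is a word in the conjugates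
`a_i = t ^ i * a * t ^ (-i)` of the other letters, and is shorter as such. By Moldavanskii's
observation the one-relator group is then an HNN extension with stable letter `t`, whose base is the
one-relator group on the letters `a_i` with the subscripts of one letter `x` of `r` restricted to
the interval which occurs in `r`, and whose associated subgroups are generated by letters, omitting
`x` with the greatest, respectively the least, subscript. The induction hypothesis applies to both,
and Britton's lemma turns an enumeration of the reduced words of the HNN extension into the required
facts for `r`. If no letter has exponent sum zero, the substitutions `y ↦ y ^ (k + 1)` and
`x ↦ x * y ^ δ` embed the group in a one-relator group in which `y` has exponent sum zero.
-/

namespace OneRelator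

open FreeGroup (of mk lift)

section REPred

variable {α : Type*} {β : Type*} [Primcodable α] [Primcodable β]

theorem rePred_comp {p : β → Prop} (hp : REPred p) {g : α → β} (hg : Primrec g) :
    REPred fun a ↦ p (g a) :=
  Partrec.comp hp hg.to_comp

theorem rePred_and {p q : α → Prop} (hp : REPred p) (hq : REPred q) :
    REPred fun a ↦ p a ∧ q a :=
  (Partrec.bind hp (Partrec.comp hq Computable.fst).to₂).dom_re.of_eq fun a ↦ by
    simp [Part.assert]

theorem rePred_or {p q : α → Prop} (hp : REPred p) (hq : REPred q) :
    REPred fun a ↦ p a ∨ q a := by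
  obtain ⟨k, hk, hdom⟩ := Partrec.merge' hp hq
  exact hk.dom_re.of_eq fun a ↦ by simpa [Part.assert] using (hdom a).2

theorem rePred_iff_exists_primrecRel {p : α → Prop} :
    REPred p ↔ ∃ f : α → ℕ → Prop, PrimrecRel f ∧ ∀ a, p a ↔ ∃ n, f a n := by
  constructor
  · intro hp
    obtain ⟨c, hc⟩ := Nat.Partrec.Code.exists_code.1 hp
    have hdom (a : α) : p a ↔ (c.eval (Encodable.encode a)).Dom := by
      simp [hc, Part.assert]
    have heval : Primrec fun x : α × ℕ ↦ (c.evaln x.2 (Encodable.encode x.1)).isSome :=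
      Primrec.option_isSome.comp <| Nat.Partrec.Code.primrec_evaln.comp <|
        (Primrec.snd.pair (Primrec.const c)).pair (Primrec.encode.comp Primrec.fst)
    refine ⟨fun a n ↦ (c.evaln n (Encodable.encode a)).isSome,
      Primrec.primrecPred (heval.of_eq fun x ↦ by simp), fun a ↦ ?_⟩
    simp only [hdom, Part.dom_iff_mem, Nat.Partrec.Code.evaln_complete, Option.isSome_iff_exists,
      Option.mem_def]
    exact exists_comm
  · rintro ⟨f, ⟨_, hf⟩, h⟩
    refine (Partrec.rfind hf.to_comp.partrec.to₂).dom_re.of_eq fun a ↦ Nat.rfind_dom.trans ?_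
    simp only [h]
    exact exists_congr fun n ↦ by simp

theorem rePred_exists {p : α × β → Prop} (hp : REPred p) : REPred fun a ↦ ∃ b, p (a, b) := by
  obtain ⟨f, hf, hfp⟩ := rePred_iff_exists_primrecRel.1 hp
  have hmem : PrimrecRel fun (b : β) (y : α × ℕ) ↦ f (y.1, b) y.2 :=
    hf.comp (.pair (Primrec.fst.comp Primrec.snd) Primrec.fst) (Primrec.snd.comp Primrec.snd)
  have hdec : Primrec fun x : α × ℕ ↦ (Encodable.decode (α := β) x.2.unpair.1).toList :=
    Primrec.optionToList.comp
      (Primrec.decode.comp (Primrec.fst.comp (Primrec.unpair.comp Primrec.snd)))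
  refine rePred_iff_exists_primrecRel.2 ⟨fun a n ↦
    ∃ b ∈ (Encodable.decode (α := β) n.unpair.1).toList, f (a, b) n.unpair.2,
    hmem.exists_mem_list.comp hdec (Primrec.fst.pair
      (Primrec.snd.comp (Primrec.unpair.comp Primrec.snd))), fun a ↦ ?_⟩
  constructor
  · rintro ⟨b, hb⟩
    obtain ⟨n, hn⟩ := (hfp (a, b)).1 hb
    exact ⟨Nat.pair (Encodable.encode b) n, b, by simp, by simpa using hn⟩
  · rintro ⟨n, b, -, hb⟩
    exact ⟨b, (hfp (a, b)).2 ⟨_, hb⟩⟩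

theorem rePred_forall_mem {p : α × β → Prop} (hp : REPred p) {l : α → List β} (hl : Primrec l) :
    REPred fun a ↦ ∀ b ∈ l a, p (a, b) := by
  obtain ⟨f, hf, hfp⟩ := rePred_iff_exists_primrecRel.1 hp
  have hf' : PrimrecRel fun (k : ℕ) (y : β × (α × ℕ)) ↦ f (y.2.1, y.1) k :=
    hf.comp (.pair (Primrec.fst.comp (Primrec.snd.comp Primrec.snd))
      (Primrec.fst.comp Primrec.snd)) Primrec.fst
  have hbdd : PrimrecRel fun (b : β) (y : α × ℕ) ↦ ∃ k ∈ List.range y.2, f (y.1, b) k :=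
    hf'.exists_mem_list.comp (Primrec.list_range.comp (Primrec.snd.comp Primrec.snd)) Primrec.id
  refine rePred_iff_exists_primrecRel.2 ⟨fun a n ↦ ∀ b ∈ l a, ∃ k ∈ List.range n, f (a, b) k,
    hbdd.forall_mem_list.comp (hl.comp Primrec.fst) Primrec.id, fun a ↦ ?_⟩
  simp only [List.mem_range]
  constructor
  · intro h
    choose! k hk using fun b hb ↦ (hfp (a, b)).1 (h b hb)
    exact ⟨((l a).map k).sum + 1, fun b hb ↦ ⟨k b, Nat.lt_succ_of_le <|
      List.single_le_sum (by simp) _ (List.mem_map_of_mem hb), hk b hb⟩⟩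
  · rintro ⟨n, hn⟩ b hb
    obtain ⟨k, -, hk⟩ := hn b hb
    exact (hfp (a, b)).2 ⟨k, hk⟩

theorem rePred_isChain {R : β → β → Prop} (hR : REPred fun x : β × β ↦ R x.1 x.2) :
    REPred fun l : List β ↦ l.IsChain R := by
  have hget : Primrec fun x : List β × ℕ ↦ x.1[x.2]?.toList :=
    Primrec.optionToList.comp Primrec.list_getElem?
  have hsnd : REPred fun x : (List β × ℕ) × β ↦ ∀ b ∈ x.1.1[x.1.2 + 1]?.toList, R x.2 b :=
    rePred_forall_mem (p := fun x : ((List β × ℕ) × β) × β ↦ R x.1.2 x.2)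
      (rePred_comp hR ((Primrec.snd.comp Primrec.fst).pair Primrec.snd))
      (hget.comp (g := fun x : (List β × ℕ) × β ↦ (x.1.1, x.1.2 + 1))
        ((Primrec.fst.comp Primrec.fst).pair (Primrec.succ.comp (Primrec.snd.comp Primrec.fst))))
  refine (rePred_forall_mem (rePred_forall_mem hsnd hget)
    (Primrec.list_range.comp Primrec.list_length)).of_eq fun l ↦ ?_
  simp only [List.mem_range, Option.mem_toList, List.getElem?_eq_some_iff,
    List.isChain_iff_getElem]
  refine ⟨fun h i hi ↦ h i (by omega) _ ⟨_, rfl⟩ _ ⟨hi, rfl⟩, ?_⟩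
  rintro h i - _ ⟨_, rfl⟩ _ ⟨hi, rfl⟩
  exact h i hi

end REPred

section Primcodable

variable {α β γ : Type*} [Primcodable α] [DecidableEq α] [Primcodable β] [DecidableEq β]
  [Primcodable γ]

theorem reduce_eq_foldr {α : Type*} [DecidableEq α] (L : List (α × Bool)) :
    FreeGroup.reduce L = L.foldr (fun a M ↦ List.casesOn M [a] fun b T ↦
      if a.1 = b.1 ∧ a.2 = !b.2 then T else a :: b :: T) [] := by
  induction L with
  | nil => rfl
  | cons a L ih => rw [FreeGroup.reduce.cons, List.foldr_cons, ← ih]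

theorem primrec_reduce : Primrec (FreeGroup.reduce : List (α × Bool) → List (α × Bool)) := by
  have hcons : Primrec fun x : ((α × Bool) × List (α × Bool)) × ((α × Bool) × List (α × Bool)) ↦
      if x.1.1.1 = x.2.1.1 ∧ x.1.1.2 = !x.2.1.2 then x.2.2 else x.1.1 :: x.2.1 :: x.2.2 := by
    have ha := Primrec.fst.comp (Primrec.fst (α := (α × Bool) × List (α × Bool))
      (β := (α × Bool) × List (α × Bool)))
    have hb := Primrec.fst.comp (Primrec.snd (α := (α × Bool) × List (α × Bool))
      (β := (α × Bool) × List (α × Bool)))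
    have hT := Primrec.snd.comp (Primrec.snd (α := (α × Bool) × List (α × Bool))
      (β := (α × Bool) × List (α × Bool)))
    exact Primrec.ite (.and (Primrec.eq.comp (Primrec.fst.comp ha) (Primrec.fst.comp hb))
      (Primrec.eq.comp (Primrec.snd.comp ha) (Primrec.not.comp (Primrec.snd.comp hb))))
      hT (Primrec.list_cons.comp ha (Primrec.list_cons.comp hb hT))
  have hstep : Primrec fun y : (α × Bool) × List (α × Bool) ↦
      (List.casesOn y.2 [y.1] fun b T ↦
        if y.1.1 = b.1 ∧ y.1.2 = !b.2 then T else y.1 :: b :: T : List (α × Bool)) :=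
    Primrec.list_casesOn Primrec.snd
      (Primrec.list_cons.comp Primrec.fst (Primrec.const [])) hcons.to₂
  exact (Primrec.list_foldr Primrec.id (Primrec.const []) (hstep.comp Primrec.snd).to₂).of_eq
    fun L ↦ (reduce_eq_foldr L).symm

theorem primrecPred_reduced : PrimrecPred fun L : List (α × Bool) ↦ FreeGroup.reduce L = L :=
  Primrec.eq.comp primrec_reduce Primrec.id

/-- Elements of a free group correspond to reduced words; this equivalence encodes them. -/
def reducedWordEquiv (α : Type*) [DecidableEq α] :
    FreeGroup α ≃ {L : List (α × Bool) // FreeGroup.reduce L = L} where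
  toFun w := ⟨w.toWord, FreeGroup.reduce_toWord w⟩
  invFun L := mk L.1
  left_inv _ := FreeGroup.mk_toWord
  right_inv L := Subtype.ext (by simpa using L.2)

instance : Primcodable (FreeGroup α) :=
  @Primcodable.ofEquiv _ _ (Primcodable.subtype primrecPred_reduced) (reducedWordEquiv α)

theorem primrec_toWord : Primrec (FreeGroup.toWord : FreeGroup α → List (α × Bool)) :=
  letI := Primcodable.subtype (primrecPred_reduced (α := α))
  (Primrec.subtype_val (hp := primrecPred_reduced)).comp
    (Primrec.of_equiv (e := reducedWordEquiv α))

theorem primrec_mk : Primrec (mk : List (α × Bool) → FreeGroup α) :=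
  letI := Primcodable.subtype (primrecPred_reduced (α := α))
  ((Primrec.of_equiv_symm (e := reducedWordEquiv α)).comp
    (Primrec.subtype_mk (h := fun L ↦ FreeGroup.reduce.idem (L := L)) primrec_reduce)).of_eq
      fun _ ↦ FreeGroup.reduce.self

theorem primrec_mul : Primrec₂ fun u v : FreeGroup α ↦ u * v :=
  (primrec_mk.comp (Primrec.list_append.comp (primrec_toWord.comp Primrec.fst)
    (primrec_toWord.comp Primrec.snd))).of_eq fun ⟨u, v⟩ ↦ by
      rw [← FreeGroup.mul_mk, FreeGroup.mk_toWord, FreeGroup.mk_toWord]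

theorem primrec_inv : Primrec fun u : FreeGroup α ↦ u⁻¹ := by
  have hinv : Primrec (FreeGroup.invRev : List (α × Bool) → List (α × Bool)) :=
    Primrec.list_reverse.comp (Primrec.list_map (g := fun _ (a : α × Bool) ↦ (a.1, !a.2))
      Primrec.id (Primrec.pair (Primrec.fst.comp Primrec.snd)
        (Primrec.not.comp (Primrec.snd.comp Primrec.snd))))
  exact (primrec_mk.comp (hinv.comp primrec_toWord)).of_eq fun u ↦ by
    rw [← FreeGroup.inv_mk, FreeGroup.mk_toWord]

theorem primrec_of : Primrec (of : α → FreeGroup α) :=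
  primrec_mk.comp (Primrec.list_cons.comp (Primrec.id.pair (Primrec.const true))
    (Primrec.const []))

theorem primrec_list_prod {f : γ → List (FreeGroup α)} (hf : Primrec f) :
    Primrec fun c ↦ (f c).prod :=
  (Primrec.list_foldr (h := fun (_ : γ) (y : FreeGroup α × FreeGroup α) ↦ y.1 * y.2)
    hf (Primrec.const 1) (primrec_mul.comp (Primrec.fst.comp Primrec.snd)
      (Primrec.snd.comp Primrec.snd))).of_eq fun _ ↦ List.prod_eq_foldr.symm

theorem primrec_lift {f : α → FreeGroup β} (hf : Primrec f) : Primrec (lift f) := by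
  have hletter : Primrec fun p : α × Bool ↦ cond p.2 (f p.1) (f p.1)⁻¹ :=
    Primrec.cond Primrec.snd (hf.comp Primrec.fst) (primrec_inv.comp (hf.comp Primrec.fst))
  refine (primrec_list_prod (Primrec.list_map primrec_toWord
    (hletter.comp Primrec.snd).to₂)).of_eq fun w ↦ ?_
  conv_rhs => rw [← FreeGroup.mk_toWord (x := w), FreeGroup.lift_mk]

theorem primrec_int_of_nat {f : ℤ → γ} (hnat : Primrec fun n : ℕ ↦ f n)
    (hneg : Primrec fun n : ℕ ↦ f (Int.negSucc n)) : Primrec f := by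
  have hdiv : Primrec fun i : ℤ ↦ Nat.div2 (Encodable.encode i) :=
    Primrec.nat_div2.comp Primrec.encode
  refine (Primrec.cond (Primrec.nat_bodd.comp (Primrec.encode (α := ℤ))) (hneg.comp hdiv)
    (hnat.comp hdiv)).of_eq fun i ↦ ?_
  have hencode (n : ℕ) : Encodable.encode (n : ℤ) = 2 * n := rfl
  have hencode' (n : ℕ) : Encodable.encode (Int.negSucc n) = 2 * n + 1 := rfl
  cases i with
  | ofNat n => simp [hencode]
  | negSucc n => simp [hencode']

theorem primrec_zpow (g : FreeGroup α) : Primrec fun i : ℤ ↦ g ^ i := by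
  have hpow (h : FreeGroup α) : Primrec fun n : ℕ ↦ h ^ n :=
    (Primrec.nat_rec₁ 1 (primrec_mul.comp Primrec.snd (Primrec.const h)).to₂).of_eq fun n ↦ by
      induction n with
      | zero => rfl
      | succ n ih => rw [pow_succ, ← ih]
  refine primrec_int_of_nat ((hpow g).of_eq fun n ↦ (zpow_natCast g n).symm) ?_
  simp only [zpow_negSucc]
  exact primrec_inv.comp ((hpow g).comp Primrec.succ)

instance : Primcodable ℤˣ :=
  Primcodable.ofEquiv Bool
    { toFun u := decide (u = 1), invFun b := cond b 1 (-1),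
      left_inv := by decide, right_inv := by decide }

theorem primrec_freeGroupAction {f : α → Equiv.Perm γ} (hf : Primrec₂ fun a c ↦ f a c)
    (hinv : Primrec₂ fun a c ↦ (f a)⁻¹ c) (c : γ) :
    Primrec fun w : FreeGroup α ↦ lift f w c := by
  have hletter : Primrec₂ fun (p : α × Bool) (c : γ) ↦ (cond p.2 (f p.1) (f p.1)⁻¹) c :=
    (Primrec.cond (Primrec.snd.comp Primrec.fst)
      (hf.comp (Primrec.fst.comp Primrec.fst) Primrec.snd)
      (hinv.comp (Primrec.fst.comp Primrec.fst) Primrec.snd)).of_eq fun ⟨⟨a, b⟩, c⟩ ↦ by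
        cases b <;> rfl
  refine (Primrec.list_foldr primrec_toWord (Primrec.const c)
    (hletter.comp (Primrec.fst.comp Primrec.snd) (Primrec.snd.comp Primrec.snd)).to₂).of_eq
      fun w ↦ ?_
  conv_rhs => rw [← FreeGroup.mk_toWord (x := w), FreeGroup.lift_mk]
  induction w.toWord with
  | nil => rfl
  | cons p L ih => simp [ih]

end Primcodable

section LetterSubgroup

variable {A B : Type*}

/-- The subgroup of a free group generated by a set of letters. -/
def letterSubgroup (S : Set A) : Subgroup (FreeGroup A) := Subgroup.closure (of '' S)

theorem of_mem_letterSubgroup {S : Set A} {a : A} (ha : a ∈ S) : of a ∈ letterSubgroup S :=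
  Subgroup.subset_closure ⟨a, ha, rfl⟩

theorem letterSubgroup_mono {S T : Set A} (h : S ⊆ T) : letterSubgroup S ≤ letterSubgroup T :=
  Subgroup.closure_mono (Set.image_mono h)

theorem letterSubgroup_univ : letterSubgroup (Set.univ : Set A) = ⊤ := by
  rw [letterSubgroup, Set.image_univ, FreeGroup.closure_range_of]

theorem map_letterSubgroup_eq_closure {G : Type*} [Group G] (φ : FreeGroup A →* G) (S : Set A) :
    (letterSubgroup S).map φ = Subgroup.closure ((fun a ↦ φ (of a)) '' S) := by
  rw [letterSubgroup, MonoidHom.map_closure, Set.image_image]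

theorem map_letterSubgroup (f : A → B) (S : Set A) :
    (letterSubgroup S).map (FreeGroup.map f) = letterSubgroup (f '' S) := by
  rw [map_letterSubgroup_eq_closure, letterSubgroup, Set.image_image]
  simp only [FreeGroup.map.of]

theorem eqOn_letterSubgroup {G : Type*} [Group G] {φ ψ : FreeGroup A →* G} {S : Set A}
    (h : ∀ a ∈ S, φ (of a) = ψ (of a)) {w : FreeGroup A} (hw : w ∈ letterSubgroup S) :
    φ w = ψ w :=
  MonoidHom.eqOn_closure (Set.forall_mem_image.2 h) hw

theorem mk_cons (p : A × Bool) (L : List (A × Bool)) :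
    mk (p :: L) = of p.1 ^ (cond p.2 1 (-1) : ℤ) * mk L := by
  obtain ⟨a, _ | _⟩ := p <;> simp [of, FreeGroup.inv_mk, FreeGroup.invRev, FreeGroup.mul_mk]

theorem mk_mem_letterSubgroup {S : Set A} {L : List (A × Bool)} (h : ∀ p ∈ L, p.1 ∈ S) :
    mk L ∈ letterSubgroup S := by
  induction L with
  | nil => exact one_mem _
  | cons p L ih =>
    rw [mk_cons]
    exact mul_mem (zpow_mem (of_mem_letterSubgroup (h p List.mem_cons_self)) _)
      (ih fun q hq ↦ h q (List.mem_cons_of_mem p hq))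

theorem mem_letterSubgroup_iff [DecidableEq A] {S : Set A} {w : FreeGroup A} :
    w ∈ letterSubgroup S ↔ ∀ p ∈ w.toWord, p.1 ∈ S := by
  refine ⟨fun hw ↦ ?_, fun hw ↦ FreeGroup.mk_toWord (x := w) ▸ mk_mem_letterSubgroup hw⟩
  induction hw using Subgroup.closure_induction with
  | mem _ hx =>
    obtain ⟨a, ha, rfl⟩ := hx
    simpa using ha
  | one => simp
  | mul u v _ _ hu hv =>
    exact fun p hp ↦ (List.mem_append.1 ((FreeGroup.toWord_mul_sublist u v).subset hp)).elim
      (hu p) (hv p)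
  | inv u _ hu =>
    intro p hp
    rw [FreeGroup.toWord_inv, FreeGroup.invRev, List.mem_reverse, List.mem_map] at hp
    obtain ⟨q, hq, rfl⟩ := hp
    exact hu q hq

open Classical in
/-- The endomorphism of a free group fixing the letters in `S` and killing all others. -/
noncomputable def letterRetraction (S : Set A) : FreeGroup A →* FreeGroup A :=
  lift fun a ↦ if a ∈ S then of a else 1

theorem letterRetraction_of_mem {S : Set A} {a : A} (ha : a ∈ S) :
    letterRetraction S (of a) = of a := by
  simp [letterRetraction, ha]

theorem letterRetraction_of_notMem {S : Set A} {a : A} (ha : a ∉ S) :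
    letterRetraction S (of a) = 1 := by
  simp [letterRetraction, ha]

theorem letterRetraction_mem (S : Set A) (w : FreeGroup A) :
    letterRetraction S w ∈ letterSubgroup S := by
  have hle : (letterSubgroup Set.univ).map (letterRetraction S) ≤ letterSubgroup S := by
    rw [map_letterSubgroup_eq_closure, Subgroup.closure_le]
    rintro _ ⟨a, -, rfl⟩
    by_cases ha : a ∈ S
    · simpa [letterRetraction_of_mem ha] using of_mem_letterSubgroup ha
    · simp [letterRetraction_of_notMem ha]
  rw [letterSubgroup_univ] at hle
  exact hle ⟨w, trivial, rfl⟩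

variable [Primcodable A] [DecidableEq A]

theorem primrec_letterRetraction {S : Set A} (hS : PrimrecPred (· ∈ S)) :
    Primrec (letterRetraction S) := by
  classical
  exact primrec_lift (Primrec.ite hS primrec_of (Primrec.const 1))

theorem primrecPred_mem_letterSubgroup {S : Set A} (hS : PrimrecPred (· ∈ S)) :
    PrimrecPred (· ∈ letterSubgroup S) :=
  ((hS.comp Primrec.fst).forall_mem_list.comp primrec_toWord).of_eq
    fun _ ↦ mem_letterSubgroup_iff.symm

theorem rePred_mem_closure {s : Set (FreeGroup A)} (hs : REPred (· ∈ s)) :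
    REPred (· ∈ Subgroup.closure s) := by
  have hsymm : REPred fun x : List (FreeGroup A) × FreeGroup A ↦ x.2 ∈ s ∨ x.2⁻¹ ∈ s :=
    rePred_or (rePred_comp hs Primrec.snd) (rePred_comp hs (primrec_inv.comp Primrec.snd))
  have hlist : REPred fun l : List (FreeGroup A) ↦ ∀ g ∈ l, g ∈ s ∨ g⁻¹ ∈ s :=
    rePred_forall_mem hsymm Primrec.id
  have hprod : PrimrecPred fun x : FreeGroup A × List (FreeGroup A) ↦ x.2.prod = x.1 :=
    Primrec.eq.comp (primrec_list_prod Primrec.snd) Primrec.fst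
  refine (rePred_exists (rePred_and (rePred_comp hlist Primrec.snd)
    hprod.computablePred.to_re)).of_eq fun w ↦ ?_
  rw [← Subgroup.mem_toSubmonoid, Subgroup.closure_toSubmonoid]
  refine ⟨?_, Submonoid.exists_list_of_mem_closure⟩
  rintro ⟨l, hl, hlw : l.prod = w⟩
  exact hlw ▸ Submonoid.list_prod_mem _ fun g hg ↦ Submonoid.subset_closure (hl g hg)

theorem rePred_mem_normalClosure_singleton (r : FreeGroup A) :
    REPred (· ∈ Subgroup.normalClosure {r}) := by
  have hconj : PrimrecPred fun x : FreeGroup A × FreeGroup A ↦ x.2 * r * x.2⁻¹ = x.1 :=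
    Primrec.eq.comp (primrec_mul.comp (primrec_mul.comp Primrec.snd (Primrec.const r))
      (primrec_inv.comp Primrec.snd)) Primrec.fst
  refine rePred_mem_closure ((rePred_exists hconj.computablePred.to_re).of_eq fun w ↦ ?_)
  simp [Group.mem_conjugatesOfSet_iff, isConj_iff]

end LetterSubgroup

theorem mem_sup_normal_iff {G : Type*} [Group G] {H N : Subgroup G} [N.Normal] {g : G} :
    g ∈ H ⊔ N ↔ ∃ h ∈ H, h⁻¹ * g ∈ N := by
  rw [Subgroup.mem_sup_of_normal_right]
  exact exists_congr fun h ↦ and_congr_right fun _ ↦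
    ⟨by rintro ⟨n, hn, rfl⟩; simpa using hn, fun hn ↦ ⟨_, hn, mul_inv_cancel_left h g⟩⟩

section IsMagnusSet

variable {A : Type*} [Primcodable A] [DecidableEq A]

/-- The property of a set `S` of letters established by Magnus' induction, for a normal subgroup
`N` of relations: the letters in `S` freely generate a subgroup of the quotient by `N`
(the *Freiheitssatz*), and the generalized word problem for this subgroup is co-r.e. -/
structure IsMagnusSet (N : Subgroup (FreeGroup A)) (S : Set A) : Prop where
  disjoint : Disjoint (letterSubgroup S) N
  rePred_notMem_sup : REPred (· ∉ letterSubgroup S ⊔ N)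

namespace IsMagnusSet

variable {N : Subgroup (FreeGroup A)} [N.Normal] {S : Set A}

theorem rePred_notMem_sup_of_le (h : IsMagnusSet N S) (hN : REPred (· ∈ N))
    (hS : PrimrecPred (· ∈ S)) {P : Subgroup (FreeGroup A)} (hPS : P ≤ letterSubgroup S)
    (hP : REPred (· ∉ P)) : REPred (· ∉ P ⊔ N) := by
  have hcert : REPred fun x : FreeGroup A × FreeGroup A ↦
      x.2 ∈ letterSubgroup S ∧ x.2⁻¹ * x.1 ∈ N ∧ x.2 ∉ P :=
    rePred_and (rePred_comp (primrecPred_mem_letterSubgroup hS).computablePred.to_re Primrec.snd)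
      (rePred_and (rePred_comp hN (primrec_mul.comp (primrec_inv.comp Primrec.snd) Primrec.fst))
        (rePred_comp hP Primrec.snd))
  refine (rePred_or h.rePred_notMem_sup (rePred_exists hcert)).of_eq fun w ↦ ?_
  constructor
  · rintro (hw | ⟨u, hu, huw, huP⟩) hwP
    · exact hw (sup_le_sup_right hPS N hwP)
    · obtain ⟨v, hv, hvw⟩ := mem_sup_normal_iff.1 hwP
      have huv : v⁻¹ * u = 1 := (Subgroup.disjoint_def.1 h.disjoint)
        (mul_mem (inv_mem (hPS hv)) hu) (by simpa [mul_assoc] using mul_mem hvw (inv_mem huw))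
      exact huP (inv_mul_eq_one.1 huv ▸ hv)
  · intro hw
    by_cases hwS : w ∈ letterSubgroup S ⊔ N
    · obtain ⟨u, hu, huw⟩ := mem_sup_normal_iff.1 hwS
      exact .inr ⟨u, hu, huw, fun huP ↦ hw (mem_sup_normal_iff.2 ⟨u, huP, huw⟩)⟩
    · exact .inl hwS

theorem mono (h : IsMagnusSet N S) (hN : REPred (· ∈ N)) (hS : PrimrecPred (· ∈ S)) {T : Set A}
    (hTS : T ⊆ S) (hT : PrimrecPred (· ∈ T)) : IsMagnusSet N T where
  disjoint := h.disjoint.mono_left (letterSubgroup_mono hTS)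
  rePred_notMem_sup := h.rePred_notMem_sup_of_le hN hS (letterSubgroup_mono hTS)
    (primrecPred_mem_letterSubgroup hT).not.computablePred.to_re

theorem rePred_notMem (h : IsMagnusSet N S) (hN : REPred (· ∈ N)) (hS : PrimrecPred (· ∈ S)) :
    REPred (· ∉ N) := by
  have hbot : PrimrecPred fun w : FreeGroup A ↦ w = 1 := Primrec.eq.comp Primrec.id (.const 1)
  simpa using h.rePred_notMem_sup_of_le hN hS bot_le
    (hbot.not.computablePred.to_re.of_eq fun w ↦ by simp [Subgroup.mem_bot])

end IsMagnusSet

end IsMagnusSet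

section HNNExtension

open HNNExtension (NormalWord)
open HNNExtension.NormalWord (ReducedWord TransversalPair)

variable {G : Type*} [Group G] {X Y : Subgroup G} {φ : X ≃* Y}

theorem notMem_map_of_iff_exists_reducedWord {D : Subgroup G} {e : HNNExtension G X Y φ} :
    e ∉ D.map HNNExtension.of ↔
      ∃ w : ReducedWord G X Y, w.prod φ = e ∧ (w.toList ≠ [] ∨ w.head ∉ D) := by
  constructor
  · intro he
    obtain ⟨d⟩ := TransversalPair.nonempty G X Y
    obtain ⟨n, rfl⟩ : ∃ n : NormalWord d, n.prod φ = e :=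
      ⟨NormalWord.equiv φ d e, (NormalWord.equiv φ d).left_inv e⟩
    refine ⟨n.toReducedWord, rfl, or_iff_not_imp_left.2 fun hnil hD ↦ he ⟨n.head, hD, ?_⟩⟩
    simp [ReducedWord.prod, not_not.1 hnil]
  · rintro ⟨w, rfl, hw⟩ ⟨g, hg, hgw⟩
    have hnil := HNNExtension.ReducedWord.toList_eq_nil_of_mem_of_range φ w ⟨g, hgw⟩
    have hhead : g = w.head := by
      simpa [ReducedWord.prod, hnil, (HNNExtension.of_injective φ).eq_iff] using hgw
    exact hw.elim (· hnil) (· (hhead ▸ hg))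

variable {A B : Type*}

/-- The word `Ψ v * τ ^ ε₁ * Ψ v₁ * ⋯ * τ ^ εₙ * Ψ vₙ` described by the code
`(v, [(ε₁, v₁), …, (εₙ, vₙ)])`, which represents a word of an HNN extension when `Ψ` describes the
base group and `τ` represents the stable letter. -/
def hnnWord (Ψ : FreeGroup B →* FreeGroup A) (τ : FreeGroup A)
    (c : FreeGroup B × List (ℤˣ × FreeGroup B)) : FreeGroup A :=
  Ψ c.1 * (c.2.map fun x ↦ τ ^ (x.1 : ℤ) * Ψ x.2).prod

section Codes

variable {q : FreeGroup A →* HNNExtension G X Y φ} {p : FreeGroup B →* G}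
  {Ψ : FreeGroup B →* FreeGroup A} {τ : FreeGroup A}

theorem map_hnnWord (hΨ : ∀ v, q (Ψ v) = HNNExtension.of (p v)) (hτ : q τ = HNNExtension.t)
    (c : FreeGroup B × List (ℤˣ × FreeGroup B)) :
    q (hnnWord Ψ τ c) = HNNExtension.of (p c.1) *
      ((c.2.map (Prod.map id p)).map fun x ↦
        HNNExtension.t ^ (x.1 : ℤ) * HNNExtension.of x.2).prod := by
  simp only [hnnWord, map_mul, hΨ, map_list_prod, List.map_map]
  congr 3
  funext x
  simp [hΨ, hτ]

theorem map_notMem_map_of_iff_exists_hnnWord (hp : Function.Surjective p)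
    (hΨ : ∀ v, q (Ψ v) = HNNExtension.of (p v)) (hτ : q τ = HNNExtension.t) {D : Subgroup G}
    {w : FreeGroup A} :
    q w ∉ D.map HNNExtension.of ↔ ∃ c : FreeGroup B × List (ℤˣ × FreeGroup B),
      c.2.IsChain (fun x y ↦ p x.2 ∉ HNNExtension.toSubgroup X Y x.1 ∨ x.1 = y.1) ∧
      (c.2 ≠ [] ∨ p c.1 ∉ D) ∧ w⁻¹ * hnnWord Ψ τ c ∈ q.ker := by
  simp only [notMem_map_of_iff_exists_reducedWord, MonoidHom.mem_ker, map_mul, map_inv,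
    inv_mul_eq_one, map_hnnWord hΨ hτ]
  constructor
  · rintro ⟨⟨g, l, hchain⟩, hw, hD⟩
    obtain ⟨v, rfl⟩ := hp g
    obtain ⟨l, rfl⟩ := (Function.surjective_id.prodMap hp).list_map l
    refine ⟨(v, l), ?_, by simpa using hD, hw.symm⟩
    rw [List.isChain_map] at hchain
    exact hchain.imp fun _ _ h ↦ not_or_of_imp h
  · rintro ⟨⟨v, l⟩, hchain, hD, hw⟩
    refine ⟨⟨p v, l.map (Prod.map id p), ?_⟩, hw.symm, by simpa using hD⟩
    rw [List.isChain_map]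
    exact hchain.imp fun _ _ h ↦ imp_iff_not_or.2 h

variable [Primcodable A] [DecidableEq A] [Primcodable B] [DecidableEq B]

theorem primrec_hnnWord (hΨ : Primrec Ψ) : Primrec (hnnWord Ψ τ) := by
  have hletter : Primrec fun x : ℤˣ × FreeGroup B ↦ τ ^ (x.1 : ℤ) * Ψ x.2 :=
    primrec_mul.comp ((Primrec.dom_finite fun ε : ℤˣ ↦ τ ^ (ε : ℤ)).comp Primrec.fst)
      (hΨ.comp Primrec.snd)
  exact primrec_mul.comp (hΨ.comp Primrec.fst)
    (primrec_list_prod (Primrec.list_map Primrec.snd (hletter.comp Primrec.snd).to₂))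

theorem rePred_notMem_toSubgroup (hX : REPred (p · ∉ X)) (hY : REPred (p · ∉ Y)) :
    REPred fun x : ℤˣ × FreeGroup B ↦ p x.2 ∉ HNNExtension.toSubgroup X Y x.1 := by
  have hsign (ε : ℤˣ) : REPred fun x : ℤˣ × FreeGroup B ↦ x.1 = ε :=
    (Primrec.eq.comp Primrec.fst (.const ε)).computablePred.to_re
  refine (rePred_or (rePred_and (hsign 1) (rePred_comp hX Primrec.snd))
    (rePred_and (hsign (-1)) (rePred_comp hY Primrec.snd))).of_eq fun ⟨ε, v⟩ ↦ ?_
  obtain rfl | rfl := Int.units_eq_one_or ε <;> simp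

theorem rePred_map_notMem_map_of (hp : Function.Surjective p) (hΨ : Primrec Ψ)
    (hqΨ : ∀ v, q (Ψ v) = HNNExtension.of (p v)) (hqτ : q τ = HNNExtension.t)
    (hq : REPred (· ∈ q.ker)) (hX : REPred (p · ∉ X)) (hY : REPred (p · ∉ Y)) {D : Subgroup G}
    (hD : REPred (p · ∉ D)) : REPred fun w ↦ q w ∉ D.map HNNExtension.of := by
  have hchain : REPred fun l : List (ℤˣ × FreeGroup B) ↦
      l.IsChain fun x y ↦ p x.2 ∉ HNNExtension.toSubgroup X Y x.1 ∨ x.1 = y.1 :=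
    rePred_isChain (rePred_or (rePred_comp (rePred_notMem_toSubgroup hX hY) Primrec.fst)
      (Primrec.eq.comp (Primrec.fst.comp Primrec.fst)
        (Primrec.fst.comp Primrec.snd)).computablePred.to_re)
  have hnil : REPred fun l : List (ℤˣ × FreeGroup B) ↦ l ≠ [] :=
    (Primrec.eq.comp Primrec.id (.const [])).not.computablePred.to_re
  have hword : Primrec fun x : FreeGroup A × FreeGroup B × List (ℤˣ × FreeGroup B) ↦
      x.1⁻¹ * hnnWord Ψ τ x.2 :=
    primrec_mul.comp (primrec_inv.comp Primrec.fst) ((primrec_hnnWord hΨ).comp Primrec.snd)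
  exact (rePred_exists (rePred_and (rePred_comp hchain (Primrec.snd.comp Primrec.snd))
    (rePred_and (rePred_or (rePred_comp hnil (Primrec.snd.comp Primrec.snd))
      (rePred_comp hD (Primrec.fst.comp Primrec.snd))) (rePred_comp hq hword)))).of_eq
    fun w ↦ (map_notMem_map_of_iff_exists_hnnWord hp hqΨ hqτ).symm

end Codes

end HNNExtension

section Subscripts

variable {A : Type*}

/-- The homomorphism sending the subscripted letter `a_i`, encoded as `(a, i)`, to the conjugate
`t ^ i * a * t ^ (-i)` which it abbreviates. -/
def unsubscript (t : A) : FreeGroup (A × ℤ) →* FreeGroup A :=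
  lift fun b ↦ of t ^ b.2 * of b.1 * (of t ^ b.2)⁻¹

theorem unsubscript_of (t : A) (b : A × ℤ) :
    unsubscript t (of b) = of t ^ b.2 * of b.1 * (of t ^ b.2)⁻¹ :=
  FreeGroup.lift_apply_of

theorem unsubscript_map_add (t : A) (k : ℤ) (v : FreeGroup (A × ℤ)) :
    unsubscript t (FreeGroup.map (Prod.map id (· + k)) v) =
      of t ^ k * unsubscript t v * (of t ^ k)⁻¹ := by
  have h : (unsubscript t).comp (FreeGroup.map (Prod.map id (· + k))) =
      (MulAut.conj (of t ^ k)).toMonoidHom.comp (unsubscript t) :=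
    FreeGroup.ext_hom _ _ fun b ↦ by
      simp only [MonoidHom.comp_apply, FreeGroup.map.of, unsubscript_of, Prod.map_fst,
        Prod.map_snd, id, add_comm b.2 k, zpow_add, MulEquiv.coe_toMonoidHom, MulAut.conj_apply]
      group
  exact DFunLike.congr_fun h v

theorem map_unsubscript_le_letterSubgroup_compl {t x : A} (htx : t ≠ x) :
    (letterSubgroup {b | b.1 ≠ x}).map (unsubscript t) ≤ letterSubgroup {x}ᶜ := by
  rw [map_letterSubgroup_eq_closure, Subgroup.closure_le]
  rintro _ ⟨b, hb, rfl⟩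
  have ht := zpow_mem (of_mem_letterSubgroup (S := {x}ᶜ) htx) b.2
  simp only [unsubscript_of]
  exact mul_mem (mul_mem ht (of_mem_letterSubgroup hb)) (inv_mem ht)

variable [DecidableEq A]

/-- The rewriting of a word in terms of subscripted letters: reading from the left, an occurrence
of `t` increases the subscripts of all later letters, and one of `t⁻¹` decreases them. -/
def subscriptWord (t : A) : List (A × Bool) → List ((A × ℤ) × Bool)
  | [] => []
  | (a, b) :: L =>
    if a = t then (subscriptWord t L).map fun p ↦ (Prod.map id (· + cond b 1 (-1)) p.1, p.2)
    else ((a, 0), b) :: subscriptWord t L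

theorem length_subscriptWord (t : A) (L : List (A × Bool)) :
    (subscriptWord t L).length = L.countP (·.1 ≠ t) := by
  induction L with
  | nil => rfl
  | cons p L ih => by_cases h : p.1 = t <;> simp_all [subscriptWord]

theorem ne_and_mem_of_mem_subscriptWord {t : A} {L : List (A × Bool)} {p : (A × ℤ) × Bool}
    (hp : p ∈ subscriptWord t L) : p.1.1 ≠ t ∧ (p.1.1, p.2) ∈ L := by
  induction L generalizing p with
  | nil => simp [subscriptWord] at hp
  | cons q L ih =>
    rw [subscriptWord] at hp
    split_ifs at hp with hq
    · obtain ⟨p', hp', rfl⟩ := List.mem_map.1 hp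
      exact (ih hp').imp_right (List.mem_cons_of_mem q)
    · obtain rfl | hp := List.mem_cons.1 hp
      · exact ⟨hq, List.mem_cons_self⟩
      · exact (ih hp).imp_right (List.mem_cons_of_mem q)

theorem unsubscript_mk_subscriptWord_mul (t : A) (L : List (A × Bool)) :
    unsubscript t (mk (subscriptWord t L)) * letterRetraction {t} (mk L) = mk L := by
  induction L with
  | nil => simp [subscriptWord, ← FreeGroup.one_eq_mk]
  | cons p L ih =>
    obtain ⟨a, b⟩ := p
    rw [mk_cons, map_mul, map_zpow, subscriptWord]
    split_ifs with h
    · rw [h, letterRetraction_of_mem (Set.mem_singleton t), ← FreeGroup.map.mk,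
        unsubscript_map_add]
      simp only [mul_assoc, inv_mul_cancel_left, ih]
    · rw [letterRetraction_of_notMem (Set.notMem_singleton_iff.2 h), one_zpow, one_mul, mk_cons,
        map_mul, map_zpow, unsubscript_of, mul_assoc, ih]
      simp

omit [DecidableEq A] in
theorem mul_inv_letterRetraction_mem_map_unsubscript (t : A) {S : Set A} {w : FreeGroup A}
    (hw : w ∈ letterSubgroup S) : w * (letterRetraction {t} w)⁻¹ ∈
      (letterSubgroup {b : A × ℤ | b.1 ≠ t ∧ b.1 ∈ S}).map (unsubscript t) := by
  classical
  refine ⟨mk (subscriptWord t w.toWord), mk_mem_letterSubgroup fun p hp ↦ ?_, ?_⟩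
  · exact (ne_and_mem_of_mem_subscriptWord hp).imp_right (mem_letterSubgroup_iff.1 hw _)
  · rw [eq_mul_inv_iff_mul_eq]
    simpa only [FreeGroup.mk_toWord] using unsubscript_mk_subscriptWord_mul t w.toWord

end Subscripts

section HNNOfEmbeddings

variable {A B : Type*}

theorem mk'_mem_map_mk'_iff {G : Type*} [Group G] {N : Subgroup G} [N.Normal] {H : Subgroup G}
    {g : G} : QuotientGroup.mk' N g ∈ H.map (QuotientGroup.mk' N) ↔ g ∈ H ⊔ N := by
  rw [← Subgroup.mem_comap, Subgroup.comap_map_eq, QuotientGroup.ker_mk']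

theorem injective_mk'_comp_map {N : Subgroup (FreeGroup B)} [N.Normal] {f : A → B}
    (hf : Function.Injective f) (hN : Disjoint (letterSubgroup (Set.range f)) N) :
    Function.Injective ((QuotientGroup.mk' N).comp (FreeGroup.map f)) := by
  rw [injective_iff_map_eq_one]
  intro w hw
  have hwf : FreeGroup.map f w ∈ letterSubgroup (Set.range f) := by
    rw [letterSubgroup, ← FreeGroup.range_map]
    exact ⟨w, rfl⟩
  have hwN : FreeGroup.map f w ∈ N := (QuotientGroup.eq_one_iff _).1 hw
  exact (map_eq_one_iff _ (FreeGroup.map_injective hf)).1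
    (Subgroup.disjoint_def.1 hN hwf hwN)

theorem range_mk'_comp_map (N : Subgroup (FreeGroup B)) [N.Normal] (f : A → B) :
    ((QuotientGroup.mk' N).comp (FreeGroup.map f)).range =
      (letterSubgroup (Set.range f)).map (QuotientGroup.mk' N) := by
  rw [MonoidHom.range_comp, FreeGroup.range_map, letterSubgroup]

/-- The HNN extension of `G` identifying the images of two embeddings of a group `K`. -/
abbrev HNNOfEmbeddings {K G : Type*} [Group K] [Group G] {f g : K →* G}
    (hf : Function.Injective f) (hg : Function.Injective g) : Type _ :=
  HNNExtension G f.range g.range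
    ((MonoidHom.ofInjective hf).symm.trans (MonoidHom.ofInjective hg))

theorem t_mul_of_eq_of_mul_t {K G : Type*} [Group K] [Group G] {f g : K →* G}
    (hf : Function.Injective f) (hg : Function.Injective g) (k : K) :
    (HNNExtension.t * HNNExtension.of (f k) : HNNOfEmbeddings hf hg) =
      HNNExtension.of (g k) * HNNExtension.t := by
  have h := HNNExtension.t_mul_of (φ := (MonoidHom.ofInjective hf).symm.trans
    (MonoidHom.ofInjective hg)) (MonoidHom.ofInjective hf k)
  rwa [MulEquiv.trans_apply, MulEquiv.symm_apply_apply] at h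

end HNNOfEmbeddings

section BaseLetters

variable {A : Type*} {t x : A} {n : ℕ}

/-- The subscripted letters generating the base of the Moldavanskii HNN extension with stable
letter `t`: the subscripts of the letter `x` are restricted to `0, …, n`, those of the other letters
are arbitrary. -/
def baseLetters (t x : A) (n : ℕ) : Set (A × ℤ) :=
  {b | b.1 ≠ t ∧ (b.1 = x → 0 ≤ b.2 ∧ b.2 ≤ n)}

/-- The homomorphism of `unsubscript` on the base of the Moldavanskii HNN extension. -/
def baseHom (t x : A) (n : ℕ) : FreeGroup (baseLetters t x n) →* FreeGroup A :=
  (unsubscript t).comp (FreeGroup.map Subtype.val)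

theorem baseHom_of (b : baseLetters t x n) :
    baseHom t x n (of b) = of t ^ b.1.2 * of b.1.1 * (of t ^ b.1.2)⁻¹ := by
  rw [baseHom, MonoidHom.comp_apply, FreeGroup.map.of, unsubscript_of]

theorem mem_baseLetters {a : A} {i : ℤ} :
    (a, i) ∈ baseLetters t x n ↔ a ≠ t ∧ (a = x → 0 ≤ i ∧ i ≤ n) :=
  Iff.rfl

theorem mem_baseLetters_zero {a : A} : (a, (0 : ℤ)) ∈ baseLetters t x n ↔ a ≠ t := by
  simp [baseLetters]

/-- The letters of the base whose subscript can be increased. They generate the first associated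
subgroup. -/
def raisableLetters (t x : A) (n : ℕ) : Set (baseLetters t x n) :=
  {b | (b.1.1, b.1.2 + 1) ∈ baseLetters t x n}

/-- The letters of the base whose subscript can be decreased. They generate the second associated
subgroup. -/
def lowerableLetters (t x : A) (n : ℕ) : Set (baseLetters t x n) :=
  {b | (b.1.1, b.1.2 - 1) ∈ baseLetters t x n}

theorem raisableLetters_eq_compl_singleton (h : (x, (n : ℤ)) ∈ baseLetters t x n) :
    raisableLetters t x n = {⟨(x, n), h⟩}ᶜ := by
  ext ⟨⟨a, i⟩, ha⟩
  change (a, i + 1) ∈ baseLetters t x n ↔ _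
  rw [mem_baseLetters] at ha ⊢
  simp only [Set.mem_compl_singleton_iff, ne_eq, Subtype.mk.injEq, Prod.mk.injEq]
  grind

theorem lowerableLetters_eq_compl_singleton (h : (x, 0) ∈ baseLetters t x n) :
    lowerableLetters t x n = {⟨(x, 0), h⟩}ᶜ := by
  ext ⟨⟨a, i⟩, ha⟩
  change (a, i - 1) ∈ baseLetters t x n ↔ _
  rw [mem_baseLetters] at ha ⊢
  simp only [Set.mem_compl_singleton_iff, ne_eq, Subtype.mk.injEq, Prod.mk.injEq]
  grind

/-- The map increasing the subscript, which is how the stable letter acts on the first associated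
subgroup. -/
def raise (b : raisableLetters t x n) : baseLetters t x n :=
  ⟨(b.1.1.1, b.1.1.2 + 1), b.2⟩

theorem raise_injective : Function.Injective (raise : raisableLetters t x n → _) := by
  rintro ⟨⟨⟨a, i⟩, _⟩, _⟩ ⟨⟨⟨b, j⟩, _⟩, _⟩ h
  simpa [raise, Subtype.ext_iff] using h

theorem range_raise : Set.range (raise : raisableLetters t x n → _) = lowerableLetters t x n := by
  ext ⟨⟨a, i⟩, hb⟩
  constructor
  · rintro ⟨c, hc⟩
    obtain ⟨rfl, rfl⟩ : c.1.1.1 = a ∧ c.1.1.2 + 1 = i := by simpa [raise, Subtype.ext_iff] using hc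
    simp [lowerableLetters]
  · intro h
    exact ⟨⟨⟨(a, i - 1), h⟩, by simpa [raisableLetters] using hb⟩, by simp [raise]⟩

theorem baseHom_map_raise (v : FreeGroup (raisableLetters t x n)) :
    baseHom t x n (FreeGroup.map raise v) =
      of t * baseHom t x n (FreeGroup.map Subtype.val v) * (of t)⁻¹ := by
  have h : (baseHom t x n).comp (FreeGroup.map raise) =
      (MulAut.conj (of t)).toMonoidHom.comp ((baseHom t x n).comp (FreeGroup.map Subtype.val)) :=
    FreeGroup.ext_hom _ _ fun b ↦ by
      simp [baseHom_of, raise, zpow_add, (Commute.refl (of t)).zpow_left _ |>.eq, mul_assoc]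
  exact DFunLike.congr_fun h v

theorem letterRetraction_baseHom (v : FreeGroup (baseLetters t x n)) :
    letterRetraction {t} (baseHom t x n v) = 1 := by
  have h : (letterRetraction {t}).comp (baseHom t x n) = 1 := FreeGroup.ext_hom _ _ fun b ↦ by
    simp [baseHom_of, letterRetraction_of_notMem (Set.notMem_singleton_iff.2 b.2.1)]
  exact DFunLike.congr_fun h v

theorem normalClosure_baseHom_le_ker_letterRetraction (s : FreeGroup (baseLetters t x n)) :
    Subgroup.normalClosure {baseHom t x n s} ≤ (letterRetraction {t}).ker :=
  Subgroup.normalClosure_le_normal (Set.singleton_subset_iff.2 (letterRetraction_baseHom s))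

theorem map_baseHom_le_letterSubgroup_compl (htx : t ≠ x) :
    (letterSubgroup {b | b.1.1 ≠ x}).map (baseHom t x n) ≤ letterSubgroup {x}ᶜ := by
  rw [baseHom, ← Subgroup.map_map, map_letterSubgroup]
  refine (Subgroup.map_mono (letterSubgroup_mono ?_)).trans
    (map_unsubscript_le_letterSubgroup_compl htx)
  exact Set.image_subset_iff.2 fun _ hb ↦ hb

theorem map_baseHom_subscript_zero :
    (letterSubgroup {b | b.1.2 = 0}).map (baseHom t x n) = letterSubgroup {t}ᶜ := by
  rw [map_letterSubgroup_eq_closure, letterSubgroup]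
  congr 1
  ext w
  constructor
  · rintro ⟨⟨⟨a, i⟩, ha, hi⟩, rfl : i = 0, rfl⟩
    exact ⟨a, ha, by simp [baseHom_of]⟩
  · rintro ⟨a, ha, rfl⟩
    exact ⟨⟨(a, 0), mem_baseLetters_zero.2 ha⟩, rfl, by simp [baseHom_of]⟩

theorem mul_inv_letterRetraction_mem_map_baseHom {w : FreeGroup A}
    (hw : w ∈ letterSubgroup {x}ᶜ) : w * (letterRetraction {t} w)⁻¹ ∈
      (letterSubgroup {b | b.1.1 ≠ x}).map (baseHom t x n) := by
  have hval : {b : A × ℤ | b.1 ≠ t ∧ b.1 ∈ ({x}ᶜ : Set A)} ⊆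
      Subtype.val '' {b : baseLetters t x n | b.1.1 ≠ x} :=
    fun b hb ↦ ⟨⟨b, hb.1, fun h ↦ absurd h hb.2⟩, hb.2, rfl⟩
  rw [baseHom, ← Subgroup.map_map, map_letterSubgroup]
  exact Subgroup.map_mono (letterSubgroup_mono hval)
    (mul_inv_letterRetraction_mem_map_unsubscript t hw)

theorem mem_letterSubgroup_compl_sup_iff (htx : t ≠ x) {s : FreeGroup (baseLetters t x n)}
    {w : FreeGroup A} :
    w ∈ letterSubgroup {x}ᶜ ⊔ Subgroup.normalClosure {baseHom t x n s} ↔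
      w * (letterRetraction {t} w)⁻¹ ∈ (letterSubgroup {b | b.1.1 ≠ x}).map (baseHom t x n) ⊔
        Subgroup.normalClosure {baseHom t x n s} := by
  set N := Subgroup.normalClosure {baseHom t x n s}
  have hκ : letterRetraction {t} w ∈ letterSubgroup {x}ᶜ :=
    letterSubgroup_mono (Set.singleton_subset_iff.2 htx) (letterRetraction_mem _ w)
  constructor
  · intro hw
    obtain ⟨h, hh, hhw⟩ := mem_sup_normal_iff.1 hw
    have hκh := normalClosure_baseHom_le_ker_letterRetraction s hhw
    rw [MonoidHom.mem_ker, map_mul, map_inv, inv_mul_eq_one] at hκh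
    refine mem_sup_normal_iff.2 ⟨_, mul_inv_letterRetraction_mem_map_baseHom hh, ?_⟩
    convert (inferInstance : N.Normal).conj_mem _ hhw (letterRetraction {t} w) using 1
    rw [hκh]
    group
  · intro hw
    have h := mul_mem (sup_le_sup_right (map_baseHom_le_letterSubgroup_compl htx) N hw)
      (Subgroup.mem_sup_left hκ)
    rwa [inv_mul_cancel_right] at h

end BaseLetters

section Extension

open QuotientGroup (mk')
open Subgroup (normalClosure)

variable {A : Type*} {t x : A} {n : ℕ} {s : FreeGroup (baseLetters t x n)}

theorem injective_mk'_comp_map_subtypeVal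
    (h : Disjoint (letterSubgroup (raisableLetters t x n)) (normalClosure {s})) :
    Function.Injective ((mk' (normalClosure {s})).comp
      (FreeGroup.map (Subtype.val : raisableLetters t x n → _))) :=
  injective_mk'_comp_map Subtype.val_injective (by rwa [Subtype.range_val])

theorem injective_mk'_comp_map_raise
    (h : Disjoint (letterSubgroup (lowerableLetters t x n)) (normalClosure {s})) :
    Function.Injective ((mk' (normalClosure {s})).comp
      (FreeGroup.map (raise : raisableLetters t x n → _))) :=
  injective_mk'_comp_map raise_injective (by rwa [range_raise])

variable
  (hf : Function.Injective ((mk' (normalClosure {s})).comp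
    (FreeGroup.map (Subtype.val : raisableLetters t x n → _))))
  (hg : Function.Injective ((mk' (normalClosure {s})).comp
    (FreeGroup.map (raise : raisableLetters t x n → _))))

/-- The HNN extension of the one-relator group with relator `s` whose stable letter increases
subscripts. It is the one-relator group with relator `baseHom t x n s`. -/
abbrev MoldavanskiiExtension : Type _ := HNNOfEmbeddings hf hg

theorem t_mul_of_mk'_of {a : A} {i : ℤ} (hi : (a, i) ∈ baseLetters t x n)
    (hi' : (a, i + 1) ∈ baseLetters t x n) :
    (HNNExtension.t * HNNExtension.of (mk' _ (of ⟨(a, i), hi⟩)) : MoldavanskiiExtension hf hg) *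
      HNNExtension.t⁻¹ = HNNExtension.of (mk' _ (of ⟨(a, i + 1), hi'⟩)) := by
  have h := t_mul_of_eq_of_mul_t hf hg (of ⟨⟨(a, i), hi⟩, hi'⟩)
  simp only [MonoidHom.comp_apply, FreeGroup.map.of] at h
  rw [h, mul_inv_cancel_right, raise]

theorem t_zpow_conj_of_mk'_of {a : A} {i : ℤ} (h₀ : (a, 0) ∈ baseLetters t x n)
    (hi : (a, i) ∈ baseLetters t x n) :
    (HNNExtension.t ^ i * HNNExtension.of (mk' _ (of ⟨(a, 0), h₀⟩)) *
      (HNNExtension.t ^ i)⁻¹ : MoldavanskiiExtension hf hg) =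
        HNNExtension.of (mk' _ (of ⟨(a, i), hi⟩)) := by
  induction i with
  | zero => simp
  | succ i ih =>
    have hi' : (a, (i : ℤ)) ∈ baseLetters t x n :=
      ⟨hi.1, fun ha ↦ ⟨by omega, (lt_of_lt_of_le (lt_add_one _) (hi.2 ha).2).le⟩⟩
    rw [← t_mul_of_mk'_of hf hg hi' hi, ← ih hi', add_comm, zpow_add, zpow_one]
    group
  | pred i ih =>
    have hi' : (a, -(i : ℤ)) ∈ baseLetters t x n :=
      ⟨hi.1, fun ha ↦ absurd (hi.2 ha).1 (by dsimp only; omega)⟩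
    have h := t_mul_of_mk'_of hf hg hi (by simpa using hi')
    simp only [sub_add_cancel] at h
    rw [← ih hi', mul_inv_eq_iff_eq_mul] at h
    rw [eq_inv_mul_of_mul_eq h, sub_eq_neg_add, zpow_add, zpow_neg_one]
    group

open Classical in
/-- The homomorphism inducing the isomorphism from the one-relator group with relator
`baseHom t x n s` to its Moldavanskii HNN extension. -/
noncomputable def toExtension : FreeGroup A →* MoldavanskiiExtension hf hg :=
  lift fun a ↦ if h : a ≠ t then
    HNNExtension.of (mk' _ (of ⟨(a, 0), mem_baseLetters_zero.2 h⟩)) else HNNExtension.t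

theorem toExtension_of_self : toExtension hf hg (of t) = HNNExtension.t := by
  simp [toExtension]

theorem toExtension_baseHom (v : FreeGroup (baseLetters t x n)) :
    toExtension hf hg (baseHom t x n v) = HNNExtension.of (mk' _ v) := by
  have h : (toExtension hf hg).comp (baseHom t x n) = HNNExtension.of.comp (mk' _) :=
    FreeGroup.ext_hom _ _ fun ⟨⟨a, i⟩, hi⟩ ↦ by
      have h₀ : toExtension hf hg (of a) =
          HNNExtension.of (mk' _ (of ⟨(a, 0), mem_baseLetters_zero.2 hi.1⟩)) := by
        rw [toExtension, FreeGroup.lift_apply_of, dif_pos hi.1]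
      rw [MonoidHom.comp_apply, baseHom_of, map_mul, map_mul, map_inv, map_zpow,
        toExtension_of_self, h₀, t_zpow_conj_of_mk'_of hf hg _ hi, MonoidHom.comp_apply]
  exact DFunLike.congr_fun h v

theorem normalClosure_le_comap_baseHom :
    normalClosure {s} ≤ (normalClosure {baseHom t x n s}).comap (baseHom t x n) :=
  Subgroup.normalClosure_le_normal
    (Set.singleton_subset_iff.2 (Subgroup.subset_normalClosure (Set.mem_singleton _)))

/-- The inverse of the isomorphism induced by `toExtension`. -/
noncomputable def ofExtension :
    MoldavanskiiExtension hf hg →* FreeGroup A ⧸ normalClosure {baseHom t x n s} :=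
  HNNExtension.lift
    (QuotientGroup.map _ (normalClosure {baseHom t x n s}) (baseHom t x n)
      normalClosure_le_comap_baseHom)
    (mk' (normalClosure {baseHom t x n s}) (of t)) (by
      rintro ⟨_, v, rfl⟩
      have h : (MonoidHom.ofInjective hf).symm ⟨_, v, rfl⟩ = v :=
        (MonoidHom.ofInjective hf).symm_apply_apply v
      rw [MulEquiv.trans_apply, h, MonoidHom.ofInjective_apply]
      simp [baseHom_map_raise])

theorem ofExtension_toExtension (w : FreeGroup A) :
    ofExtension hf hg (toExtension hf hg w) = mk' (normalClosure {baseHom t x n s}) w := by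
  have h : (ofExtension hf hg).comp (toExtension hf hg) = mk' (normalClosure {baseHom t x n s}) :=
    FreeGroup.ext_hom _ _ fun a ↦ by
      by_cases ha : a = t
      · simp [ha, toExtension_of_self, ofExtension]
      · simp [ha, toExtension, ofExtension, baseHom_of]
  exact DFunLike.congr_fun h w

theorem ker_toExtension : (toExtension hf hg).ker = normalClosure {baseHom t x n s} := by
  apply le_antisymm
  · intro w hw
    rw [← QuotientGroup.eq_one_iff, ← QuotientGroup.mk'_apply, ← ofExtension_toExtension hf hg,
      MonoidHom.mem_ker.1 hw, map_one]
  · have hs : mk' (normalClosure {s}) s = 1 :=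
      (QuotientGroup.eq_one_iff s).2 (Subgroup.subset_normalClosure rfl)
    exact Subgroup.normalClosure_le_normal (by simp [toExtension_baseHom, hs])

end Extension

section Transfer

open QuotientGroup (mk')
open Subgroup (normalClosure)

variable {A : Type*} [Primcodable A] [DecidableEq A] {t x : A} {n : ℕ}

omit [DecidableEq A] in
theorem primrecPred_mem_baseLetters (t x : A) (n : ℕ) :
    PrimrecPred (· ∈ baseLetters t x n) := by
  classical
  have hne (a : A) : PrimrecPred fun b : A × ℤ ↦ b.1 = a :=
    Primrec.eq.comp Primrec.fst (Primrec.const a)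
  have hIcc : PrimrecPred fun b : A × ℤ ↦ ∃ i ∈ (Finset.Icc 0 (n : ℤ)).toList, i = b.2 :=
    PrimrecRel.exists_mem_list Primrec.eq |>.comp (Primrec.const _) Primrec.snd
  exact ((hne t).not.and ((hne x).not.or hIcc)).of_eq fun b ↦ by
    simp [baseLetters, imp_iff_not_or]

instance (t x : A) (n : ℕ) : DecidablePred (· ∈ baseLetters t x n) := fun b ↦
  inferInstanceAs (Decidable (b.1 ≠ t ∧ (b.1 = x → 0 ≤ b.2 ∧ b.2 ≤ n)))

instance : Primcodable (baseLetters t x n) :=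
  Primcodable.subtype (primrecPred_mem_baseLetters t x n)

theorem primrec_baseHom : Primrec (baseHom t x n) := by
  have hval : Primrec fun b : baseLetters t x n ↦ b.1 := Primrec.subtype_val
  have hpow : Primrec fun b : baseLetters t x n ↦ of t ^ b.1.2 :=
    (primrec_zpow _).comp (Primrec.snd.comp hval)
  have hletter := primrec_mul.comp (primrec_mul.comp hpow
    (primrec_of.comp (Primrec.fst.comp hval))) (primrec_inv.comp hpow)
  refine (primrec_lift hletter).of_eq fun v ↦ DFunLike.congr_fun ?_ v
  exact FreeGroup.ext_hom _ _ fun b ↦ by rw [FreeGroup.lift_apply_of, baseHom_of]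

variable {s : FreeGroup (baseLetters t x n)}

variable (hX : IsMagnusSet (normalClosure {s}) (raisableLetters t x n))
  (hY : IsMagnusSet (normalClosure {s}) (lowerableLetters t x n))

include hX hY

theorem disjoint_map_baseHom {S : Set (baseLetters t x n)}
    (hS : Disjoint (letterSubgroup S) (normalClosure {s})) :
    Disjoint ((letterSubgroup S).map (baseHom t x n)) (normalClosure {baseHom t x n s}) := by
  have hf := injective_mk'_comp_map_subtypeVal hX.disjoint
  have hg := injective_mk'_comp_map_raise hY.disjoint
  rw [Subgroup.disjoint_def]
  rintro _ ⟨v, hv, rfl⟩ hvN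
  rw [← ker_toExtension hf hg, MonoidHom.mem_ker, toExtension_baseHom,
    map_eq_one_iff _ (HNNExtension.of_injective _)] at hvN
  rw [Subgroup.disjoint_def.1 hS hv ((QuotientGroup.eq_one_iff v).1 hvN), map_one]

theorem rePred_notMem_map_baseHom_sup {S : Set (baseLetters t x n)}
    (hS : REPred (· ∉ letterSubgroup S ⊔ normalClosure {s})) :
    REPred (· ∉ (letterSubgroup S).map (baseHom t x n) ⊔ normalClosure {baseHom t x n s}) := by
  have hf := injective_mk'_comp_map_subtypeVal hX.disjoint
  have hg := injective_mk'_comp_map_raise hY.disjoint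
  have hassoc : REPred fun v ↦ mk' (normalClosure {s}) v ∉ ((mk' (normalClosure {s})).comp
      (FreeGroup.map (Subtype.val : raisableLetters t x n → _))).range := by
    simpa only [range_mk'_comp_map, mk'_mem_map_mk'_iff, Subtype.range_val]
      using hX.rePred_notMem_sup
  have hassoc' : REPred fun v ↦ mk' (normalClosure {s}) v ∉ ((mk' (normalClosure {s})).comp
      (FreeGroup.map (raise : raisableLetters t x n → _))).range := by
    simpa only [range_mk'_comp_map, mk'_mem_map_mk'_iff, range_raise] using hY.rePred_notMem_sup
  have hker : REPred (· ∈ (toExtension hf hg).ker) := by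
    simpa only [ker_toExtension] using rePred_mem_normalClosure_singleton (baseHom t x n s)
  refine (rePred_map_notMem_map_of (QuotientGroup.mk'_surjective _) primrec_baseHom
    (toExtension_baseHom hf hg) (toExtension_of_self hf hg) hker hassoc hassoc'
    (D := (letterSubgroup S).map (mk' (normalClosure {s})))
    (by simpa only [mk'_mem_map_mk'_iff] using hS)).of_eq fun w ↦ not_congr ?_
  have hD : ((letterSubgroup S).map (mk' (normalClosure {s}))).map HNNExtension.of =
      ((letterSubgroup S).map (baseHom t x n)).map (toExtension hf hg) := by
    rw [Subgroup.map_map, Subgroup.map_map]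
    congr 1
    exact MonoidHom.ext fun v ↦ (toExtension_baseHom hf hg v).symm
  rw [hD, ← Subgroup.mem_comap, Subgroup.comap_map_eq, ker_toExtension]

theorem isMagnusSet_compl_stableLetter
    (hS : IsMagnusSet (normalClosure {s}) {b | b.1.2 = 0}) :
    IsMagnusSet (normalClosure {baseHom t x n s}) {t}ᶜ := by
  have hmap := map_baseHom_subscript_zero (t := t) (x := x) (n := n)
  exact ⟨hmap ▸ disjoint_map_baseHom hX hY hS.disjoint,
    hmap ▸ rePred_notMem_map_baseHom_sup hX hY hS.rePred_notMem_sup⟩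

theorem isMagnusSet_compl_baseLetter (htx : t ≠ x)
    (hS : IsMagnusSet (normalClosure {s}) {b | b.1.1 ≠ x}) :
    IsMagnusSet (normalClosure {baseHom t x n s}) {x}ᶜ := by
  refine ⟨Subgroup.disjoint_def.2 fun {w} hw hwN ↦ ?_, ?_⟩
  · have hwP := mul_inv_letterRetraction_mem_map_baseHom (t := t) (n := n) hw
    have hκ := normalClosure_baseHom_le_ker_letterRetraction s hwN
    rw [MonoidHom.mem_ker.1 hκ, inv_one, mul_one] at hwP
    exact Subgroup.disjoint_def.1 (disjoint_map_baseHom hX hY hS.disjoint) hwP hwN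
  · have hκ : Primrec fun w : FreeGroup A ↦ w * (letterRetraction {t} w)⁻¹ :=
      primrec_mul.comp Primrec.id (primrec_inv.comp
        (primrec_letterRetraction (Primrec.eq.comp Primrec.id (Primrec.const t))))
    exact (rePred_comp (rePred_notMem_map_baseHom_sup hX hY hS.rePred_notMem_sup) hκ).of_eq
      fun w ↦ (not_congr (mem_letterSubgroup_compl_sup_iff htx)).symm

end Transfer

section CyclicReduction

variable {A B : Type*}

theorem normalClosure_singleton_eq_of_isConj {G : Type*} [Group G] {r s : G} (h : IsConj r s) :
    Subgroup.normalClosure {r} = Subgroup.normalClosure {s} := by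
  simp only [Subgroup.normalClosure, Group.conjugatesOfSet, Set.mem_singleton_iff,
    Set.iUnion_iUnion_eq_left, isConj_iff_conjugatesOf_eq.1 h]

/-- A letter which occurs in all conjugates of `r`, as do the letters of cyclically reduced
words. -/
def IsEssentialLetter (x : A) (r : FreeGroup A) : Prop :=
  ∀ s, IsConj r s → s ∉ letterSubgroup {x}ᶜ

theorem letterRetraction_eq_self {S : Set A} {w : FreeGroup A} (hw : w ∈ letterSubgroup S) :
    letterRetraction S w = w :=
  eqOn_letterSubgroup (ψ := MonoidHom.id _) (fun _ ha ↦ letterRetraction_of_mem ha) hw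

theorem letterRetraction_eq_one {S : Set A} {w : FreeGroup A} (hw : w ∈ letterSubgroup Sᶜ) :
    letterRetraction S w = 1 :=
  eqOn_letterSubgroup (ψ := 1) (fun _ ha ↦ letterRetraction_of_notMem ha) hw

theorem isEssentialLetter_of_letterRetraction_ne_one {x : A} {r : FreeGroup A}
    (h : letterRetraction {x} r ≠ 1) : IsEssentialLetter x r := by
  intro s hrs hs
  have hconj := (letterRetraction {x}).map_isConj hrs
  rw [letterRetraction_eq_one hs, isConj_one_left] at hconj
  exact h hconj

variable [DecidableEq A]

theorem exists_isConj_isCyclicallyReduced (L : List (A × Bool)) :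
    ∃ s, IsConj (mk L) s ∧ FreeGroup.IsCyclicallyReduced s.toWord ∧ s.toWord.Sublist L := by
  have hred : FreeGroup.IsReduced (FreeGroup.reduce L) :=
    FreeGroup.toWord_mk (L₁ := L) ▸ FreeGroup.isReduced_toWord
  set C := FreeGroup.reduceCyclically (FreeGroup.reduce L)
  set D := FreeGroup.reduceCyclically.conjugator (FreeGroup.reduce L)
  have hC : FreeGroup.IsCyclicallyReduced C :=
    FreeGroup.reduceCyclically.isCyclicallyReduced hred
  have hDC : D ++ C ++ FreeGroup.invRev D = FreeGroup.reduce L :=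
    FreeGroup.reduceCyclically.conj_conjugator_reduceCyclically _
  have htoWord : (mk C).toWord = C := by rw [FreeGroup.toWord_mk, hC.isReduced.reduce_eq]
  refine ⟨mk C, (isConj_iff.2 ⟨mk D, ?_⟩).symm, htoWord.symm ▸ hC, htoWord.symm ▸ ?_⟩
  · rw [FreeGroup.inv_mk, FreeGroup.mul_mk, FreeGroup.mul_mk, hDC, FreeGroup.reduce.self]
  · calc
      C.Sublist (D ++ C) := List.sublist_append_right D C
      List.Sublist _ (FreeGroup.reduce L) := hDC ▸ List.sublist_append_left _ _
      List.Sublist _ L := FreeGroup.reduce.red.sublist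

/-- The number of letters of the reduced word of `w` which lie in `S`. -/
def letterCount (S : Set A) [DecidablePred (· ∈ S)] (w : FreeGroup A) : ℕ :=
  w.toWord.countP (·.1 ∈ S)

section LetterCount

variable {S : Set A} [DecidablePred (· ∈ S)]

theorem letterCount_mul_le (u v : FreeGroup A) :
    letterCount S (u * v) ≤ letterCount S u + letterCount S v := by
  simpa only [letterCount, List.countP_append] using
    (FreeGroup.toWord_mul_sublist u v).countP_le (p := fun p ↦ decide (p.1 ∈ S))

theorem letterCount_eq_zero_iff {w : FreeGroup A} :
    letterCount S w = 0 ↔ w ∈ letterSubgroup Sᶜ := by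
  simp [letterCount, mem_letterSubgroup_iff]

theorem letterCount_lt_length {w : FreeGroup A} {p : A × Bool} (hp : p ∈ w.toWord)
    (hpS : p.1 ∉ S) : letterCount S w < w.toWord.length := by
  rw [letterCount, List.countP_eq_length_filter, List.length_filter_lt_length_iff_exists]
  exact ⟨p, hp, by simpa using hpS⟩

theorem letterCount_inv (w : FreeGroup A) : letterCount S w⁻¹ = letterCount S w := by
  simp [letterCount, FreeGroup.invRev, List.countP_map, Function.comp_def]

theorem letterCount_pow {w : FreeGroup A} (hw : FreeGroup.IsCyclicallyReduced w.toWord) (n : ℕ) :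
    letterCount S (w ^ n) = n * letterCount S w := by
  rw [letterCount, FreeGroup.toWord_pow, (hw.flatten_replicate n).isReduced.reduce_eq,
    List.countP_flatten]
  simp [letterCount]

end LetterCount

/-- If a conjugate `s` of `r` avoided `x`, then the number of occurrences of `x` in `r ^ n`, which
is at least `n`, would be bounded independently of `n`. -/
theorem isEssentialLetter_of_mem_toWord {r : FreeGroup A}
    (hr : FreeGroup.IsCyclicallyReduced r.toWord) {p : A × Bool} (hp : p ∈ r.toWord) :
    IsEssentialLetter p.1 r := by
  intro s hrs hs
  obtain ⟨g, rfl⟩ := isConj_iff.1 hrs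
  set n := letterCount {p.1} g⁻¹ + letterCount {p.1} g + 1
  have hle : letterCount {p.1} (r ^ n) ≤ letterCount {p.1} g⁻¹ + letterCount {p.1} g :=
    calc
      letterCount {p.1} (r ^ n)
        = letterCount {p.1} (g⁻¹ * (g * r * g⁻¹) ^ n * g) := by rw [conj_pow]; group
      _ ≤ letterCount {p.1} g⁻¹ + letterCount {p.1} ((g * r * g⁻¹) ^ n) + letterCount {p.1} g :=
        (letterCount_mul_le _ _).trans (Nat.add_le_add_right (letterCount_mul_le _ _) _)
      _ = letterCount {p.1} g⁻¹ + letterCount {p.1} g := by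
        rw [letterCount_eq_zero_iff.2 (pow_mem hs n), add_zero]
  have hpos : 0 < letterCount {p.1} r := List.countP_pos_iff.2 ⟨p, hp, by simp⟩
  rw [letterCount_pow hr] at hle
  have := Nat.le_mul_of_pos_right n hpos
  omega

omit [DecidableEq A] in
theorem isCyclicallyReduced_map_iff {f : B → A} (hf : f.Injective) {L : List (B × Bool)} :
    FreeGroup.IsCyclicallyReduced (L.map (Prod.map f id)) ↔ FreeGroup.IsCyclicallyReduced L := by
  simp only [FreeGroup.IsCyclicallyReduced, FreeGroup.IsReduced, List.isChain_map,
    List.getLast?_map, List.head?_map, Option.forall_mem_map, Prod.map_fst, Prod.map_snd,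
    hf.eq_iff, id]

theorem exists_toWord_map_eq [DecidableEq B] {f : B → A} (hf : f.Injective) {v : FreeGroup A}
    (hv : FreeGroup.IsCyclicallyReduced v.toWord) (hrange : ∀ p ∈ v.toWord, p.1 ∈ Set.range f) :
    ∃ s : FreeGroup B, FreeGroup.IsCyclicallyReduced s.toWord ∧
      s.toWord.map (Prod.map f id) = v.toWord := by
  obtain ⟨L, hL⟩ : v.toWord ∈ Set.range (List.map (Prod.map f id)) := by
    rw [Set.range_list_map]
    rintro ⟨a, b⟩ hp
    obtain ⟨a, rfl⟩ := hrange _ hp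
    exact ⟨(a, b), rfl⟩
  rw [← hL, isCyclicallyReduced_map_iff hf] at hv
  have htoWord : (mk L).toWord = L := by rw [FreeGroup.toWord_mk, hv.isReduced.reduce_eq]
  exact ⟨mk L, htoWord.symm ▸ hv, htoWord.symm ▸ hL⟩

end CyclicReduction

section StableLetter

open Subgroup (normalClosure)

variable {A : Type*} [DecidableEq A] {t x : A}

theorem exists_isConj_unsubscript {r : FreeGroup A} (hr : letterRetraction {t} r = 1) :
    ∃ v : FreeGroup (A × ℤ), FreeGroup.IsCyclicallyReduced v.toWord ∧
      v.toWord.length ≤ letterCount {t}ᶜ r ∧ (∀ p ∈ v.toWord, p.1.1 ≠ t) ∧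
        IsConj r (unsubscript t v) := by
  obtain ⟨v, hconj, hv, hsub⟩ := exists_isConj_isCyclicallyReduced (subscriptWord t r.toWord)
  refine ⟨v, hv, ?_, fun p hp ↦ (ne_and_mem_of_mem_subscriptWord (hsub.subset hp)).1, ?_⟩
  · simpa [letterCount, length_subscriptWord] using hsub.length_le
  · have h := unsubscript_mk_subscriptWord_mul t r.toWord
    rw [FreeGroup.mk_toWord, hr, mul_one] at h
    exact h ▸ (unsubscript t).map_isConj hconj

/-- Here `n` is the difference between the greatest and the least subscript of `x` in `v`; the
least subscript becomes `0` on conjugating by a power of `t`. -/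
theorem exists_isConj_unsubscript_baseHom {v : FreeGroup (A × ℤ)}
    (hv : FreeGroup.IsCyclicallyReduced v.toWord) (hvt : ∀ p ∈ v.toWord, p.1.1 ≠ t)
    (hvx : ∃ p ∈ v.toWord, p.1.1 = x) :
    ∃ (n : ℕ) (s : FreeGroup (baseLetters t x n)), FreeGroup.IsCyclicallyReduced s.toWord ∧
      s.toWord.length = v.toWord.length ∧ IsConj (unsubscript t v) (baseHom t x n s) ∧
        (∃ p ∈ s.toWord, p.1.1 = (x, 0)) ∧ ∃ p ∈ s.toWord, p.1.1 = (x, (n : ℤ)) := by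
  set V := {p ∈ v.toWord.toFinset | p.1.1 = x}
  have hV : V.Nonempty := hvx.imp fun p hp ↦ by simpa [V] using hp
  obtain ⟨p, hp, hmin⟩ := V.exists_min_image (·.1.2) hV
  obtain ⟨q, hq, hmax⟩ := V.exists_max_image (·.1.2) hV
  simp only [V, Finset.mem_filter, List.mem_toFinset] at hp hq hmin hmax
  obtain ⟨n, hn⟩ := Int.eq_ofNat_of_zero_le (sub_nonneg.2 (hmin q hq))
  let f : baseLetters t x n → A × ℤ := Prod.map id (· + p.1.2) ∘ Subtype.val
  have hf : f.Injective :=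
    (Function.injective_id.prodMap (add_left_injective p.1.2)).comp Subtype.val_injective
  have hrange : ∀ c ∈ v.toWord, c.1 ∈ Set.range f := fun c hc ↦ by
    refine ⟨⟨(c.1.1, c.1.2 - p.1.2), hvt c hc, fun hcx ↦ ?_⟩, by simp [f]⟩
    have := hmin c ⟨hc, hcx⟩
    have := hmax c ⟨hc, hcx⟩
    exact ⟨by lia, by lia⟩
  obtain ⟨s, hs, hsv⟩ := exists_toWord_map_eq hf hv hrange
  have hletter : ∀ c ∈ v.toWord, ∃ d ∈ s.toWord, (d.1.1.1, d.1.1.2 + p.1.2) = c.1 := by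
    intro c hc
    obtain ⟨d, hd, rfl⟩ := List.mem_map.1 (hsv.symm ▸ hc)
    exact ⟨d, hd, rfl⟩
  have hmap : FreeGroup.map f s = v := by
    rw [← FreeGroup.mk_toWord (x := s), FreeGroup.map.mk, ← FreeGroup.mk_toWord (x := v), ← hsv]
    rfl
  refine ⟨n, s, hs, by rw [← hsv, List.length_map], (isConj_iff.2 ⟨of t ^ p.1.2, ?_⟩).symm, ?_, ?_⟩
  · rw [← hmap, ← FreeGroup.map.comp, unsubscript_map_add]
    rfl
  · obtain ⟨d, hd, hdp⟩ := hletter p hp.1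
    refine ⟨d, hd, ?_⟩
    grind
  · obtain ⟨d, hd, hdq⟩ := hletter q hq.1
    refine ⟨d, hd, ?_⟩
    grind

theorem exists_isConj_baseHom (htx : t ≠ x) {r : FreeGroup A} (hr : letterRetraction {t} r = 1)
    (hx : IsEssentialLetter x r) :
    ∃ (n : ℕ) (s : FreeGroup (baseLetters t x n)), FreeGroup.IsCyclicallyReduced s.toWord ∧
      s.toWord.length ≤ letterCount {t}ᶜ r ∧ IsConj r (baseHom t x n s) ∧
        (∃ p ∈ s.toWord, p.1.1 = (x, 0)) ∧ ∃ p ∈ s.toWord, p.1.1 = (x, (n : ℤ)) := by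
  obtain ⟨v, hv, hlen, hvt, hrv⟩ := exists_isConj_unsubscript hr
  have hvx : ∃ p ∈ v.toWord, p.1.1 = x := by
    by_contra! hvx
    exact hx _ hrv (map_unsubscript_le_letterSubgroup_compl htx
      ⟨v, mem_letterSubgroup_iff.2 hvx, rfl⟩)
  obtain ⟨n, s, hs, hsv, hconj, hx₀, hxₙ⟩ := exists_isConj_unsubscript_baseHom hv hvt hvx
  exact ⟨n, s, hs, hsv.trans_le hlen, hrv.trans hconj, hx₀, hxₙ⟩

variable [Primcodable A]

/-- The conclusion of Magnus' induction for the relator `r`: the complement of any letter occurring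
in `r` is a Magnus set. -/
def IsMagnusRelator (r : FreeGroup A) : Prop :=
  ∀ p ∈ r.toWord, IsMagnusSet (normalClosure {r}) {p.1}ᶜ

section IsMagnusRelator

variable {n : ℕ} {s : FreeGroup (baseLetters t x n)}

theorem IsMagnusRelator.isMagnusSet_raisableLetters (hs : IsMagnusRelator s)
    (hxₙ : ∃ p ∈ s.toWord, p.1.1 = (x, (n : ℤ))) :
    IsMagnusSet (normalClosure {s}) (raisableLetters t x n) := by
  obtain ⟨⟨⟨_, h⟩, b⟩, hp, rfl⟩ := hxₙ
  exact raisableLetters_eq_compl_singleton h ▸ hs _ hp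

theorem IsMagnusRelator.isMagnusSet_lowerableLetters (hs : IsMagnusRelator s)
    (hx₀ : ∃ p ∈ s.toWord, p.1.1 = (x, 0)) :
    IsMagnusSet (normalClosure {s}) (lowerableLetters t x n) := by
  obtain ⟨⟨⟨_, h⟩, b⟩, hp, rfl⟩ := hx₀
  exact lowerableLetters_eq_compl_singleton h ▸ hs _ hp

theorem IsMagnusRelator.isMagnusSet_of_notMem (hs : IsMagnusRelator s)
    {S : Set (baseLetters t x n)} (hS : PrimrecPred (· ∈ S)) {p : baseLetters t x n × Bool}
    (hp : p ∈ s.toWord) (hpS : p.1 ∉ S) : IsMagnusSet (normalClosure {s}) S :=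
  (hs p hp).mono (rePred_mem_normalClosure_singleton s)
    (Primrec.eq.comp Primrec.id (Primrec.const p.1)).not
    (Set.subset_compl_singleton_iff.2 hpS) hS

end IsMagnusRelator

variable {r : FreeGroup A} (IH : ∀ (n : ℕ) (s : FreeGroup (baseLetters t x n)),
  FreeGroup.IsCyclicallyReduced s.toWord → s.toWord.length ≤ letterCount {t}ᶜ r →
    IsMagnusRelator s)

include IH

theorem isMagnusSet_compl_of_letterRetraction_eq_one (htx : t ≠ x)
    (hr : letterRetraction {t} r = 1) (hx : IsEssentialLetter x r) :
    IsMagnusSet (normalClosure {r}) {x}ᶜ := by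
  obtain ⟨n, s, hs, hlen, hconj, hx₀, hxₙ⟩ := exists_isConj_baseHom htx hr hx
  have hsM := IH n s hs hlen
  rw [normalClosure_singleton_eq_of_isConj hconj]
  refine isMagnusSet_compl_baseLetter (hsM.isMagnusSet_raisableLetters hxₙ)
    (hsM.isMagnusSet_lowerableLetters hx₀) htx ?_
  obtain ⟨p, hp, hpx⟩ := hx₀
  refine hsM.isMagnusSet_of_notMem ?_ hp (not_not_intro (congrArg Prod.fst hpx))
  exact (Primrec.eq.comp (Primrec.fst.comp Primrec.subtype_val) (Primrec.const x)).not

theorem isMagnusSet_compl_stable_of_letterRetraction_eq_one (htx : t ≠ x)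
    (hr : letterRetraction {t} r = 1) (hx : IsEssentialLetter x r) (ht : IsEssentialLetter t r) :
    IsMagnusSet (normalClosure {r}) {t}ᶜ := by
  obtain ⟨n, s, hs, hlen, hconj, hx₀, hxₙ⟩ := exists_isConj_baseHom htx hr hx
  have hsM := IH n s hs hlen
  obtain ⟨p, hp, hp₀⟩ : ∃ p ∈ s.toWord, p.1.1.2 ≠ 0 := by
    by_contra! h₀
    exact ht _ hconj (map_baseHom_subscript_zero ▸ ⟨s, mem_letterSubgroup_iff.2 h₀, rfl⟩)
  rw [normalClosure_singleton_eq_of_isConj hconj]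
  refine isMagnusSet_compl_stableLetter (hsM.isMagnusSet_raisableLetters hxₙ)
    (hsM.isMagnusSet_lowerableLetters hx₀) (hsM.isMagnusSet_of_notMem ?_ hp hp₀)
  exact Primrec.eq.comp (Primrec.snd.comp Primrec.subtype_val) (Primrec.const 0)

end StableLetter

section Substitution

open Subgroup (normalClosure)

variable {A : Type*} [DecidableEq A]

/-- The endomorphism of a free group replacing the letter `x` by `u`. -/
def substLetter (x : A) (u : FreeGroup A) : FreeGroup A →* FreeGroup A :=
  lift (Function.update of x u)

theorem substLetter_of_self (x : A) (u : FreeGroup A) : substLetter x u (of x) = u := by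
  simp [substLetter]

theorem substLetter_of_ne {x a : A} (h : a ≠ x) (u : FreeGroup A) :
    substLetter x u (of a) = of a := by
  simp [substLetter, h]

theorem substLetter_eq_self {x : A} {u w : FreeGroup A} (hw : w ∈ letterSubgroup {x}ᶜ) :
    substLetter x u w = w :=
  eqOn_letterSubgroup (ψ := MonoidHom.id _) (fun _ ha ↦ substLetter_of_ne ha u) hw

theorem primrec_substLetter [Primcodable A] (x : A) (u : FreeGroup A) :
    Primrec (substLetter x u) :=
  primrec_lift ((Primrec.ite (Primrec.eq.comp Primrec.id (Primrec.const x)) (Primrec.const u)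
    primrec_of).of_eq fun _ ↦ (Function.update_apply _ _ _ _).symm)

theorem letterCount_substLetter_le {S : Set A} [DecidablePred (· ∈ S)] {x : A} {u : FreeGroup A}
    (hu : letterCount S u ≤ letterCount S (of x)) (w : FreeGroup A) :
    letterCount S (substLetter x u w) ≤ letterCount S w := by
  have hof (a : A) : letterCount S (substLetter x u (of a)) ≤ letterCount S (of a) := by
    obtain rfl | ha := eq_or_ne a x
    · rwa [substLetter_of_self]
    · rw [substLetter_of_ne ha]
  have hlist (L : List (A × Bool)) :
      letterCount S (substLetter x u (mk L)) ≤ L.countP (·.1 ∈ S) := by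
    induction L with
    | nil => simp [← FreeGroup.one_eq_mk, letterCount]
    | cons p L ih =>
      have hp : letterCount S (substLetter x u (of p.1 ^ (cond p.2 1 (-1) : ℤ))) ≤
          letterCount S (of p.1) := by
        obtain ⟨a, _ | _⟩ := p <;> simpa [letterCount_inv] using hof a
      rw [mk_cons, map_mul, List.countP_cons, add_comm]
      refine (letterCount_mul_le _ _).trans (add_le_add (hp.trans_eq ?_) ih)
      simp [letterCount, List.countP_cons]
  have h := hlist w.toWord
  rwa [FreeGroup.mk_toWord] at h

/-- The exponent sum of the letter `a` in an element of the free group. -/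
def exponentSum (a : A) : FreeGroup A →* Multiplicative ℤ :=
  lift (Pi.mulSingle a (Multiplicative.ofAdd 1))

theorem exponentSum_of_self (a : A) : exponentSum a (of a) = Multiplicative.ofAdd 1 := by
  simp [exponentSum]

theorem exponentSum_of_ne {a b : A} (h : b ≠ a) : exponentSum a (of b) = 1 := by
  simp [exponentSum, h]

theorem letterRetraction_singleton (a : A) (w : FreeGroup A) :
    letterRetraction {a} w = of a ^ (exponentSum a w).toAdd := by
  have h : letterRetraction {a} = (zpowersHom _ (of a)).comp (exponentSum a) :=
    FreeGroup.ext_hom _ _ fun b ↦ by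
      obtain rfl | hb := eq_or_ne b a
      · simp [letterRetraction_of_mem, exponentSum_of_self]
      · simp [letterRetraction_of_notMem, exponentSum_of_ne, hb]
  rw [h, MonoidHom.comp_apply, zpowersHom_apply]

theorem letterRetraction_singleton_eq_one_iff {a : A} {w : FreeGroup A} :
    letterRetraction {a} w = 1 ↔ exponentSum a w = 1 := by
  rw [letterRetraction_singleton]
  refine ⟨fun h ↦ ?_, fun h ↦ by rw [h, toAdd_one, zpow_zero]⟩
  simpa [exponentSum_of_self, ← ofAdd_zsmul] using congrArg (exponentSum a) h

theorem exponentSum_substLetter (x y : A) (u w : FreeGroup A) :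
    exponentSum y (substLetter x u w) =
      exponentSum y w * exponentSum y (u * (of x)⁻¹) ^ (exponentSum x w).toAdd := by
  have h : (exponentSum y).comp (substLetter x u) = exponentSum y *
      (zpowersHom _ (exponentSum y (u * (of x)⁻¹))).comp (exponentSum x) :=
    FreeGroup.ext_hom _ _ fun a ↦ by
      obtain rfl | ha := eq_or_ne a x
      · simp [substLetter_of_self, exponentSum_of_self]
      · simp [substLetter_of_ne ha, exponentSum_of_ne ha]
  exact DFunLike.congr_fun h w

theorem comap_normalClosure_singleton_of_ker {G H K : Type*} [Group G] [Group H] [Group K] {r : G}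
    {ψ : G →* H} (θ : H →* K) (h : (θ.comp ψ).ker = normalClosure {r}) :
    (normalClosure {ψ r}).comap ψ = normalClosure {r} := by
  have hr : θ (ψ r) = 1 := (h ▸ Subgroup.subset_normalClosure rfl : r ∈ (θ.comp ψ).ker)
  refine le_antisymm (fun w hw ↦ ?_) (Subgroup.normalClosure_le_normal
    (Set.singleton_subset_iff.2 (Subgroup.subset_normalClosure rfl)))
  have hθ : normalClosure {ψ r} ≤ θ.ker :=
    Subgroup.normalClosure_le_normal (Set.singleton_subset_iff.2 hr)
  exact h ▸ hθ hw

theorem comap_normalClosure_substLetter_mul_zpow {x y : A} (hxy : x ≠ y) (δ : ℤ)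
    (r : FreeGroup A) :
    (normalClosure {substLetter x (of x * of y ^ δ) r}).comap (substLetter x (of x * of y ^ δ)) =
      normalClosure {r} := by
  refine comap_normalClosure_singleton_of_ker ((QuotientGroup.mk' (normalClosure {r})).comp
    (substLetter x (of x * of y ^ (-δ)))) ?_
  have hinv : (substLetter x (of x * of y ^ (-δ))).comp (substLetter x (of x * of y ^ δ)) =
      MonoidHom.id _ := FreeGroup.ext_hom _ _ fun a ↦ by
    obtain rfl | ha := eq_or_ne a x
    · simp [substLetter_of_self, substLetter_of_ne hxy.symm]
    · simp [substLetter_of_ne ha]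
  rw [MonoidHom.comp_assoc, hinv, MonoidHom.comp_id, QuotientGroup.ker_mk']

end Substitution

section Pullback

variable {A B : Type*} [Primcodable A] [DecidableEq A] [Primcodable B] [DecidableEq B]

theorem IsMagnusSet.comap {N : Subgroup (FreeGroup B)} [N.Normal] {T : Set B}
    (h : IsMagnusSet N T) (hN : REPred (· ∈ N)) (hT : PrimrecPred (· ∈ T)) {S : Set A}
    (hS : PrimrecPred (· ∈ S)) {ψ : FreeGroup A →* FreeGroup B} (hψ : Primrec ψ)
    {σ : FreeGroup B → FreeGroup A} (hσ : Primrec σ) (hσψ : ∀ v ∈ letterSubgroup S, σ (ψ v) = v)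
    (hST : (letterSubgroup S).map ψ ≤ letterSubgroup T) : IsMagnusSet (N.comap ψ) S where
  disjoint := Subgroup.disjoint_def.2 fun {v} hv hvN ↦ by
    have hψv := Subgroup.disjoint_def.1 h.disjoint (hST ⟨v, hv, rfl⟩) hvN
    rw [← hσψ v hv, hψv, ← map_one ψ, hσψ 1 (one_mem _)]
  rePred_notMem_sup := by
    have hmap : PrimrecPred (· ∈ (letterSubgroup S).map ψ) :=
      (((primrecPred_mem_letterSubgroup hS).comp hσ).and
        (Primrec.eq.comp (hψ.comp hσ) Primrec.id)).of_eq fun u ↦ by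
          constructor
          · rintro ⟨hu, hψu⟩
            exact ⟨σ u, hu, hψu⟩
          · rintro ⟨v, hv, rfl⟩
            rw [id, hσψ v hv]
            exact ⟨hv, rfl⟩
    refine (rePred_comp (h.rePred_notMem_sup_of_le hN hT hST hmap.not.computablePred.to_re)
      hψ).of_eq fun w ↦ not_congr ?_
    simp [mem_sup_normal_iff]

end Pullback

section RootAction

open Subgroup (normalClosure)

variable {G : Type*} [Group G]

/-- The action of `ι → G` on `G × ι` by left multiplication in each fibre `G × {i}`. -/
def fiberLeftMul {ι : Type*} : (ι → G) →* Equiv.Perm (G × ι) where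
  toFun f := Equiv.prodCongrLeft fun i ↦ Equiv.mulLeft (f i)
  map_one' := Equiv.ext fun _ ↦ Prod.ext (one_mul _) rfl
  map_mul' _ _ := Equiv.ext fun _ ↦ Prod.ext (mul_assoc _ _ _) rfl

theorem fiberLeftMul_apply {ι : Type*} (f : ι → G) (z : G × ι) :
    fiberLeftMul f z = (f z.2 * z.1, z.2) := rfl

/-- The permutation of `G × Fin (k + 1)` moving cyclically through the `k + 1` fibres and
multiplying by `g` once per turn: a `(k + 1)`-st root of left multiplication by `g`. -/
def rootPerm (k : ℕ) (g : G) : Equiv.Perm (G × Fin (k + 1)) where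
  toFun z := (if z.2 + 1 = 0 then g * z.1 else z.1, z.2 + 1)
  invFun z := (if z.2 = 0 then g⁻¹ * z.1 else z.1, z.2 - 1)
  left_inv z := by
    obtain ⟨h, i⟩ := z
    by_cases hi : i + 1 = 0
    · simp [hi, ← eq_neg_of_add_eq_zero_left hi]
    · simp [hi]
  right_inv z := by
    obtain ⟨h, i⟩ := z
    by_cases hi : i = 0 <;> simp [hi]

theorem rootPerm_apply (k : ℕ) (g h : G) (i : Fin (k + 1)) :
    rootPerm k g (h, i) = (if i + 1 = 0 then g * h else h, i + 1) := rfl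

theorem rootPerm_pow (k : ℕ) (g : G) : rootPerm k g ^ (k + 1) = fiberLeftMul fun _ ↦ g := by
  have hpow (j : ℕ) (hj : j < k + 1) (h : G) : (rootPerm k g ^ j) (h, 0) = (h, ⟨j, hj⟩) := by
    induction j with
    | zero => rfl
    | succ j ih =>
      have hsucc : (⟨j, by omega⟩ : Fin (k + 1)) + 1 = ⟨j + 1, hj⟩ :=
        Fin.ext (Fin.val_add_one_of_lt' (by simpa using hj))
      have hne : (⟨j + 1, hj⟩ : Fin (k + 1)) ≠ 0 := fun h0 ↦ j.succ_ne_zero (congrArg Fin.val h0)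
      rw [pow_succ', Equiv.Perm.mul_apply, ih (by omega), rootPerm_apply, hsucc, if_neg hne]
  have hturn (h : G) : (rootPerm k g ^ (k + 1)) (h, 0) = (g * h, 0) := by
    have hlast : (⟨k, by omega⟩ : Fin (k + 1)) + 1 = 0 := Fin.last_add_one k
    rw [pow_succ', Equiv.Perm.mul_apply, hpow k (by omega), rootPerm_apply, hlast, if_pos rfl]
  ext1 ⟨h, i, hi⟩
  rw [← hpow i hi, ← Equiv.Perm.mul_apply, (Commute.pow_pow_self _ (k + 1) i).eq,
    Equiv.Perm.mul_apply, hturn, hpow i hi, hpow i hi, fiberLeftMul_apply]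

variable {A : Type*} [DecidableEq A] {k : ℕ}

/-- The action of `FreeGroup A` on `G × Fin (k + 1)` in which `b` is the root permutation of `g`
and every other letter `a` multiplies the fibre over `i` by `π a i`. -/
def rootAction (b : A) (g : G) (π : A → Fin (k + 1) → G) :
    FreeGroup A →* Equiv.Perm (G × Fin (k + 1)) :=
  lift (Function.update (fun a ↦ fiberLeftMul (π a)) b (rootPerm k g))

theorem rootAction_of_self (b : A) (g : G) (π : A → Fin (k + 1) → G) :
    rootAction b g π (of b) = rootPerm k g := by
  simp [rootAction]

theorem rootAction_of_ne {a b : A} (h : a ≠ b) (g : G) (π : A → Fin (k + 1) → G) :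
    rootAction b g π (of a) = fiberLeftMul (π a) := by
  simp [rootAction, h]

theorem primrec_rootAction {C : Type*} [Primcodable A] [Primcodable C] [DecidableEq C] (b : A)
    (g : FreeGroup C) {π : A → Fin (k + 1) → FreeGroup C} (hπ : Primrec₂ π)
    (z : FreeGroup C × Fin (k + 1)) : Primrec fun w ↦ rootAction b g π w z := by
  have hb : PrimrecPred fun p : A × FreeGroup C × Fin (k + 1) ↦ p.1 = b :=
    Primrec.eq.comp Primrec.fst (Primrec.const b)
  have hh : Primrec fun p : A × FreeGroup C × Fin (k + 1) ↦ p.2.1 :=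
    Primrec.fst.comp Primrec.snd
  have hi : Primrec fun p : A × FreeGroup C × Fin (k + 1) ↦ p.2.2 :=
    Primrec.snd.comp Primrec.snd
  have hπi : Primrec fun p : A × FreeGroup C × Fin (k + 1) ↦ π p.1 p.2.2 :=
    hπ.comp Primrec.fst hi
  have hi_add : Primrec fun p : A × FreeGroup C × Fin (k + 1) ↦ p.2.2 + 1 :=
    (Primrec.dom_finite (· + 1)).comp hi
  have hi_sub : Primrec fun p : A × FreeGroup C × Fin (k + 1) ↦ p.2.2 - 1 :=
    (Primrec.dom_finite (· - 1)).comp hi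
  refine primrec_freeGroupAction ?_ ?_ z
  · refine (Primrec.ite hb (Primrec.pair (Primrec.ite (Primrec.eq.comp hi_add (Primrec.const 0))
      (primrec_mul.comp (Primrec.const g) hh) hh) hi_add)
      (Primrec.pair (primrec_mul.comp hπi hh) hi)).of_eq fun p ↦ ?_
    by_cases hpb : p.1 = b <;> simp only [Function.update_apply, hpb, if_true, if_false] <;> rfl
  · refine (Primrec.ite hb (Primrec.pair (Primrec.ite (Primrec.eq.comp hi (Primrec.const 0))
      (primrec_mul.comp (Primrec.const g⁻¹) hh) hh) hi_sub)
      (Primrec.pair (primrec_mul.comp (primrec_inv.comp hπi) hh) hi)).of_eq fun p ↦ ?_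
    by_cases hpb : p.1 = b <;> simp only [Function.update_apply, hpb, if_true, if_false] <;> rfl

theorem rootAction_comp_substLetter_pow (b : A) (k : ℕ) (ρ : FreeGroup A →* G) :
    (rootAction b (ρ (of b)) fun a _ ↦ ρ (of a)).comp (substLetter b (of b ^ (k + 1))) =
      (fiberLeftMul.comp (Pi.constMonoidHom (Fin (k + 1)) G)).comp ρ :=
  FreeGroup.ext_hom _ _ fun a ↦ by
    obtain rfl | ha := eq_or_ne a b
    · rw [MonoidHom.comp_apply, substLetter_of_self, map_pow, rootAction_of_self, rootPerm_pow]
      rfl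
    · rw [MonoidHom.comp_apply, substLetter_of_ne ha, rootAction_of_ne ha]
      rfl

theorem comap_normalClosure_substLetter_pow (b : A) (k : ℕ) (r : FreeGroup A) :
    (normalClosure {substLetter b (of b ^ (k + 1)) r}).comap (substLetter b (of b ^ (k + 1))) =
      normalClosure {r} := by
  set ρ := QuotientGroup.mk' (normalClosure {r})
  refine comap_normalClosure_singleton_of_ker
    (rootAction b (ρ (of b)) fun a (_ : Fin (k + 1)) ↦ ρ (of a)) ?_
  have hinj : Function.Injective (fiberLeftMul.comp (Pi.constMonoidHom (Fin (k + 1))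
      (FreeGroup A ⧸ normalClosure {r}))) := fun g h hgh ↦ by
    simpa [fiberLeftMul_apply] using DFunLike.congr_fun hgh (1, 0)
  rw [rootAction_comp_substLetter_pow, MonoidHom.ker_comp_of_injective _ _ hinj,
    QuotientGroup.ker_mk']

theorem isMagnusSet_of_substLetter_pow [Primcodable A] (b : A) (k : ℕ) {r : FreeGroup A}
    {S : Set A} (hS : PrimrecPred (· ∈ S))
    (h : IsMagnusSet (normalClosure {substLetter b (of b ^ (k + 1)) r}) S) :
    IsMagnusSet (normalClosure {r}) S := by
  have hσ : Primrec fun u ↦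
      (rootAction b (of b) (fun a (_ : Fin (k + 1)) ↦ of a) u (1, 0)).1 :=
    Primrec.fst.comp (primrec_rootAction b _ (primrec_of.comp Primrec.fst).to₂ _)
  rw [← comap_normalClosure_substLetter_pow b k r]
  refine h.comap (rePred_mem_normalClosure_singleton _) hS hS (primrec_substLetter _ _) hσ
    (fun v _ ↦ ?_) ?_
  · have hv := DFunLike.congr_fun (rootAction_comp_substLetter_pow b k (MonoidHom.id _)) v
    simpa [fiberLeftMul_apply] using congr_arg Prod.fst (DFunLike.congr_fun hv (1, 0))
  · rw [map_letterSubgroup_eq_closure, Subgroup.closure_le]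
    rintro _ ⟨a, ha, rfl⟩
    obtain rfl | hab := eq_or_ne a b
    · simpa [substLetter_of_self] using pow_mem (of_mem_letterSubgroup ha) _
    · simpa [substLetter_of_ne hab] using of_mem_letterSubgroup ha

theorem isMagnusSet_of_substLetter_mul_zpow [Primcodable A] {x y : A} (hxy : x ≠ y) (δ : ℤ)
    {r : FreeGroup A}
    (h : IsMagnusSet (normalClosure {substLetter x (of x * of y ^ δ) r}) {x}ᶜ) :
    IsMagnusSet (normalClosure {r}) {x}ᶜ := by
  have hx : PrimrecPred (· ∈ ({x}ᶜ : Set A)) :=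
    (Primrec.eq.comp Primrec.id (Primrec.const x)).not
  rw [← comap_normalClosure_substLetter_mul_zpow hxy δ r]
  refine h.comap (rePred_mem_normalClosure_singleton _) hx hx (primrec_substLetter _ _) Primrec.id
    (fun v hv ↦ substLetter_eq_self hv) ?_
  rintro _ ⟨v, hv, rfl⟩
  rwa [substLetter_eq_self hv]

end RootAction

section PowerRelator

open Subgroup (normalClosure)

variable {A : Type*}

theorem map_lift_perm_apply {C K : Type*} [Group K] {f : A → Equiv.Perm C} {π : FreeGroup A →* K}
    {val : C → K} (h : ∀ a z, val (f a z) = π (of a) * val z) (w : FreeGroup A) (z : C) :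
    val (lift f w z) = π w * val z := by
  induction w using FreeGroup.induction_on generalizing z with
  | C1 => simp
  | of a => simpa using h a z
  | inv_of a _ => rw [map_inv, map_inv, eq_inv_mul_iff_mul_eq, ← h]; simp
  | mul u v hu hv => rw [map_mul, Equiv.Perm.mul_apply, hu, hv, map_mul, mul_assoc]

variable [DecidableEq A]

theorem mem_normalClosure_of_pow_iff (x : A) (k : ℕ) (w : FreeGroup A) :
    w ∈ normalClosure {of x ^ (k + 1)} ↔
      rootAction x 1 (fun a (i : Fin (k + 1)) ↦ of (a, i)) w (1, 0) = (1, 0) := by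
  set N := normalClosure {of x ^ (k + 1)}
  constructor
  · intro hw
    have hN : N ≤ (rootAction x 1 fun a (i : Fin (k + 1)) ↦ of (a, i)).ker :=
      Subgroup.normalClosure_le_normal <| Set.singleton_subset_iff.2 <| by
        rw [SetLike.mem_coe, MonoidHom.mem_ker, map_pow, rootAction_of_self, rootPerm_pow]
        exact map_one _
    rw [MonoidHom.mem_ker.1 (hN hw), Equiv.Perm.one_apply]
  · intro hw
    let ρ := QuotientGroup.mk' N
    have hρ : ρ (of x) ^ (k + 1) = 1 := by
      rw [← map_pow]
      exact (QuotientGroup.eq_one_iff _).2 (Subgroup.subset_normalClosure rfl)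
    let val (z : FreeGroup (A × Fin (k + 1)) × Fin (k + 1)) : FreeGroup A ⧸ N :=
      ρ (of x) ^ (z.2 : ℕ) *
        lift (fun c ↦ (ρ (of x) ^ (c.2 : ℕ))⁻¹ * ρ (of c.1) * ρ (of x) ^ (c.2 : ℕ)) z.1
    have hval (a : A) (z) : val (Function.update (fun a ↦ fiberLeftMul fun i ↦ of (a, i)) x
        (rootPerm k 1) a z) = ρ (of a) * val z := by
      obtain rfl | ha := eq_or_ne a x
      · have hi : ρ (of a) ^ ((z.2 + 1 : Fin (k + 1)) : ℕ) = ρ (of a) ^ ((z.2 : ℕ) + 1) := by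
          rw [pow_eq_pow_mod ((z.2 : ℕ) + 1) hρ, Fin.val_add, Fin.val_one']
          simp
        simp [val, rootPerm, hi, pow_succ', mul_assoc]
      · simp [val, ha, fiberLeftMul_apply, mul_assoc]
    have h := map_lift_perm_apply hval w (1, 0)
    rw [← rootAction, hw] at h
    exact (QuotientGroup.eq_one_iff _).1 (show ρ w = 1 by simpa [val] using h.symm)

theorem IsMagnusSet.of_le_ker [Primcodable A] {N : Subgroup (FreeGroup A)} [N.Normal] {S : Set A}
    (hS : PrimrecPred (· ∈ S)) (hker : N ≤ (letterRetraction S).ker)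
    (hN : REPred (· ∉ N)) : IsMagnusSet N S where
  disjoint := Subgroup.disjoint_def.2 fun {w} hw hwN ↦ by
    rw [← letterRetraction_eq_self hw, MonoidHom.mem_ker.1 (hker hwN)]
  rePred_notMem_sup := by
    refine (rePred_comp hN (primrec_mul.comp (primrec_inv.comp (primrec_letterRetraction hS))
      Primrec.id)).of_eq fun w ↦ not_congr ?_
    rw [mem_sup_normal_iff]
    refine ⟨fun h ↦ ⟨_, letterRetraction_mem S w, h⟩, ?_⟩
    rintro ⟨u, hu, huw⟩
    have hw := MonoidHom.mem_ker.1 (hker huw)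
    rw [map_mul, map_inv, inv_mul_eq_one, letterRetraction_eq_self hu] at hw
    rwa [← hw]

theorem normalClosure_singleton_inv {G : Type*} [Group G] (g : G) :
    normalClosure {g⁻¹} = normalClosure {g} := by
  refine le_antisymm ?_ ?_ <;>
    refine Subgroup.normalClosure_le_normal (Set.singleton_subset_iff.2 ?_)
  · exact inv_mem (Subgroup.subset_normalClosure rfl)
  · exact inv_mem_iff.1 (Subgroup.subset_normalClosure rfl)

theorem isMagnusSet_compl_of_mem_letterSubgroup_singleton [Primcodable A] {x : A} {r : FreeGroup A}
    (hr : r ∈ letterSubgroup {x}) (hr1 : r ≠ 1) : IsMagnusSet (normalClosure {r}) {x}ᶜ := by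
  have hx : PrimrecPred (· ∈ ({x}ᶜ : Set A)) :=
    (Primrec.eq.comp Primrec.id (Primrec.const x)).not
  obtain ⟨k, hk⟩ : ∃ k : ℕ, normalClosure {r} = normalClosure {of x ^ (k + 1)} := by
    have hrx := letterRetraction_singleton x r
    rw [letterRetraction_eq_self hr] at hrx
    generalize (exponentSum x r).toAdd = e at hrx
    subst hrx
    obtain ⟨n, rfl | rfl⟩ := e.eq_nat_or_neg <;> obtain _ | k := n
    · simp at hr1
    · exact ⟨k, by rw [zpow_natCast]⟩
    · simp at hr1
    · exact ⟨k, by rw [zpow_neg, zpow_natCast, normalClosure_singleton_inv]⟩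
  refine .of_le_ker hx (Subgroup.normalClosure_le_normal (Set.singleton_subset_iff.2
    (letterRetraction_eq_one (by rwa [compl_compl])))) ?_
  rw [hk]
  exact (Primrec.eq.comp (primrec_rootAction x 1 primrec_of.to₂ _)
    (Primrec.const (1, 0))).not.computablePred.to_re.of_eq fun w ↦
      not_congr (mem_normalClosure_of_pow_iff x k w).symm

end PowerRelator

section Induction

open Subgroup (normalClosure)

theorem exists_succ_mul_add_mul_eq_zero {a : ℤ} (ha : a ≠ 0) (b : ℤ) :
    ∃ (k : ℕ) (d : ℤ), (k + 1 : ℤ) * b + d * a = 0 := by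
  refine ⟨a.natAbs - 1, -(a.sign * b), ?_⟩
  have hpos : 1 ≤ a.natAbs := Int.natAbs_pos.2 ha
  rw [Nat.cast_sub hpos, Nat.cast_one, sub_add_cancel, ← Int.abs_eq_natAbs,
    ← Int.sign_mul_self_eq_abs]
  ring

variable {A : Type*} [Primcodable A] [DecidableEq A]

/-- The substitutions `y ↦ y ^ (k + 1)` and `x ↦ x * y ^ δ` make the exponent sum of `y` zero
without adding any letter other than `y` to the relator. -/
theorem isMagnusSet_compl_of_exponentSum_ne_one {x y : A} {r : FreeGroup A}
    (IH : ∀ (n : ℕ) (s : FreeGroup (baseLetters y x n)), FreeGroup.IsCyclicallyReduced s.toWord →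
      s.toWord.length ≤ letterCount {y}ᶜ r → IsMagnusRelator s)
    (hyx : y ≠ x) (hr : exponentSum x r ≠ 1) : IsMagnusSet (normalClosure {r}) {x}ᶜ := by
  obtain ⟨k, δ, hkδ⟩ := exists_succ_mul_add_mul_eq_zero (a := (exponentSum x r).toAdd)
    (by simpa using hr) (exponentSum y r).toAdd
  have hx : PrimrecPred (· ∈ ({x}ᶜ : Set A)) :=
    (Primrec.eq.comp Primrec.id (Primrec.const x)).not
  have hcount (j : ℤ) : letterCount {y}ᶜ (of y ^ j) = 0 := letterCount_eq_zero_iff.2 <|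
    zpow_mem (of_mem_letterSubgroup (by rw [compl_compl]; rfl)) j
  set r₁ := substLetter y (of y ^ (k + 1)) r with hr₁
  set r₂ := substLetter x (of x * of y ^ δ) r₁ with hr₂
  have hcount₁ : letterCount {y}ᶜ r₁ ≤ letterCount {y}ᶜ r :=
    letterCount_substLetter_le ((hcount (k + 1 : ℕ)).trans_le (Nat.zero_le _)) r
  have hcount₂ : letterCount {y}ᶜ r₂ ≤ letterCount {y}ᶜ r₁ :=
    letterCount_substLetter_le ((letterCount_mul_le _ _).trans_eq (by rw [hcount, add_zero])) r₁
  have hx₁ : exponentSum x r₁ = exponentSum x r := by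
    simp [hr₁, exponentSum_substLetter, exponentSum_of_ne hyx]
  have hx₂ : exponentSum x r₂ = exponentSum x r := by
    simp [hr₂, exponentSum_substLetter, exponentSum_of_ne hyx, hx₁]
  have hy₂ : exponentSum y r₂ = 1 := by
    rw [hr₂, exponentSum_substLetter, hx₁, hr₁, exponentSum_substLetter]
    apply Multiplicative.toAdd.injective
    simp only [map_mul, map_pow, map_zpow, map_inv, exponentSum_of_self,
      exponentSum_of_ne hyx.symm, one_mul, inv_one, mul_one, toAdd_mul, toAdd_zpow, toAdd_pow,
      toAdd_inv, toAdd_ofAdd, toAdd_one, Int.nsmul_eq_mul, Int.zsmul_eq_mul, Nat.cast_add,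
      Nat.cast_one, add_neg_cancel_right]
    linarith
  refine isMagnusSet_of_substLetter_pow y k hx (isMagnusSet_of_substLetter_mul_zpow hyx.symm δ
    (isMagnusSet_compl_of_letterRetraction_eq_one (fun n s hs hlen ↦ IH n s hs ?_) hyx ?_ ?_))
  · exact hlen.trans (hcount₂.trans hcount₁)
  · exact letterRetraction_singleton_eq_one_iff.2 hy₂
  · refine isEssentialLetter_of_letterRetraction_ne_one ?_
    rwa [Ne, letterRetraction_singleton_eq_one_iff, hx₂]

universe u

theorem isMagnusRelator_of_isCyclicallyReduced (N : ℕ) {A : Type u} [Primcodable A] [DecidableEq A]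
    {r : FreeGroup A} (hr : FreeGroup.IsCyclicallyReduced r.toWord) (hN : r.toWord.length ≤ N) :
    IsMagnusRelator r := by
  induction N generalizing A with
  | zero =>
    intro p hp
    simp [List.eq_nil_of_length_eq_zero (Nat.le_zero.1 hN)] at hp
  | succ N ih =>
    intro p hp
    have hcount {q : A × Bool} (hq : q ∈ r.toWord) : letterCount {q.1}ᶜ r ≤ N :=
      Nat.le_of_lt_succ ((letterCount_lt_length hq (not_not_intro rfl)).trans_le hN)
    by_cases hall : ∀ q ∈ r.toWord, q.1 = p.1
    · refine isMagnusSet_compl_of_mem_letterSubgroup_singleton (mem_letterSubgroup_iff.2 hall) ?_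
      rintro rfl
      simp at hp
    push Not at hall
    obtain ⟨q, hq, hqp⟩ := hall
    by_cases hx : letterRetraction {p.1} r = 1
    · exact isMagnusSet_compl_stable_of_letterRetraction_eq_one
        (fun _ _ hs hlen ↦ ih hs (hlen.trans (hcount hp))) hqp.symm hx
        (isEssentialLetter_of_mem_toWord hr hq) (isEssentialLetter_of_mem_toWord hr hp)
    · exact isMagnusSet_compl_of_exponentSum_ne_one
        (fun _ _ hs hlen ↦ ih hs (hlen.trans (hcount hq))) hqp
        (mt letterRetraction_singleton_eq_one_iff.2 hx)

theorem rePred_notMem_normalClosure_singleton (r : FreeGroup A) :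
    REPred (· ∉ normalClosure {r}) := by
  obtain ⟨s, hrs, hs, -⟩ := exists_isConj_isCyclicallyReduced r.toWord
  rw [FreeGroup.mk_toWord] at hrs
  rw [normalClosure_singleton_eq_of_isConj hrs]
  obtain rfl | hs1 := eq_or_ne s 1
  · rw [Subgroup.normalClosure_eq_bot_iff.2 subset_rfl]
    exact (Primrec.eq.comp Primrec.id (Primrec.const 1)).not.computablePred.to_re
  · obtain ⟨p, hp⟩ := List.exists_mem_of_ne_nil _ (mt FreeGroup.toWord_eq_nil_iff.1 hs1)
    exact (isMagnusRelator_of_isCyclicallyReduced _ hs le_rfl p hp).rePred_notMem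
      (rePred_mem_normalClosure_singleton s)
      (Primrec.eq.comp Primrec.id (Primrec.const p.1)).not

end Induction

end OneRelator

theorem one_relator_word_problem_decidable_general {A : Type*} [Primcodable A] (r : FreeGroup A) :
    ComputablePred fun l : List (A × Bool) ↦
      FreeGroup.mk l ∈ Subgroup.normalClosure ({r} : Set (FreeGroup A)) := by
  classical
  exact ComputablePred.computable_iff_re_compl_re'.2
    ⟨OneRelator.rePred_comp (OneRelator.rePred_mem_normalClosure_singleton r) OneRelator.primrec_mk,
      OneRelator.rePred_comp (OneRelator.rePred_notMem_normalClosure_singleton r)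
        OneRelator.primrec_mk⟩

/-- **Magnus (1932):** the word problem for any one-relator group is decidable. -/
theorem one_relator_word_problem_decidable (m : ℕ) (r : FreeGroup (Fin m)) :
    ComputablePred fun l : List (Fin m × Bool) =>
      FreeGroup.mk l ∈ Subgroup.normalClosure ({r} : Set (FreeGroup (Fin m))) :=
  one_relator_word_problem_decidable_general r
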